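/- arXiv:1312.2520 — 3 statements merged into one kernel-verified Lean document; each statement's English description precedes it below -/
import Mathlib

section
/- Let P be a finite bounded poset such that the m-cover poset P^⟨m⟩ is a lattice for every integer m > 0. Then for every integer m > 0 the lattice P^⟨m⟩ is left-modular if and only if P is (2+2)-free. -/
/-- The defining shape of elements of the `m`-cover poset: a tuple consisting of
`l₀` copies of `⊥`, then `l₁` copies of `p₁`, then `l₂` copies of `p₂`,
where `p₁ ⋖ p₂` is a cover relation. -/
def IsMCoverTuple {α : Type*} [PartialOrder α] [OrderBot α] (m : ℕ) (f : Fin m → α) : Prop :=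
  ∃ (l₀ l₁ l₂ : ℕ) (p₁ p₂ : α), l₀ + l₁ + l₂ = m ∧ p₁ ⋖ p₂ ∧
    ∀ i : Fin m, f i = if (i : ℕ) < l₀ then ⊥ else if (i : ℕ) < l₀ + l₁ then p₁ else p₂

/-- The `m`-cover poset of `α`, as a subposet of the `m`-fold direct product `Fin m → α`
with the componentwise order. -/
abbrev MCover (α : Type*) [PartialOrder α] [OrderBot α] (m : ℕ) : Type _ :=
  {f : Fin m → α // IsMCoverTuple m f}

/-- A partial order is a lattice: any two elements have a least upper bound and a
greatest lower bound. -/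
def IsLatticeOrder (β : Type*) [PartialOrder β] : Prop :=
  (∀ a b : β, ∃ c, IsLUB {a, b} c) ∧ (∀ a b : β, ∃ c, IsGLB {a, b} c)

/-- An element `x` of a lattice is left-modular if `(y ∨ x) ∧ z = y ∨ (x ∧ z)` whenever
`y < z` (phrased via least upper bounds and greatest lower bounds). -/
def LeftModularElt {β : Type*} [PartialOrder β] (x : β) : Prop :=
  ∀ y z : β, y < z → ∀ jyx mxz lhs rhs : β,
    IsLUB {y, x} jyx → IsGLB {x, z} mxz →
    IsGLB {jyx, z} lhs → IsLUB {y, mxz} rhs → lhs = rhs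

/-- A lattice is left-modular if it has a maximal chain all of whose elements are
left-modular. -/
def IsLeftModularLattice (β : Type*) [PartialOrder β] : Prop :=
  ∃ C : Set β, IsMaxChain (· ≤ ·) C ∧ ∀ x ∈ C, LeftModularElt x

/-- Two elements are incomparable. -/
def Incomp {β : Type*} [Preorder β] (a b : β) : Prop := ¬ a ≤ b ∧ ¬ b ≤ a

/-- A poset is (2+2)-free if it contains no four elements `x < y` and `x' < y'` with each
of `x, y` incomparable to each of `x', y'`. -/
def TwoPlusTwoFree (β : Type*) [Preorder β] : Prop :=
  ¬ ∃ x y x' y' : β, x < y ∧ x' < y' ∧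
      Incomp x x' ∧ Incomp x y' ∧ Incomp y x' ∧ Incomp y y'

/-- The relation satisfied by two entries `p`, `q` (in this order) of an `m`-cover tuple. -/
def CoverStep {α : Type*} [PartialOrder α] [OrderBot α] (p q : α) : Prop :=
  p = ⊥ ∨ p = q ∨ p ⋖ q

section MCoverTuple

variable {α : Type*} [PartialOrder α] {m : ℕ}

theorem CoverStep.bot_left [OrderBot α] (p : α) : CoverStep ⊥ p := Or.inl rfl

theorem CoverStep.refl [OrderBot α] (p : α) : CoverStep p p := Or.inr (Or.inl rfl)

theorem CovBy.coverStep [OrderBot α] {p q : α} (hpq : p ⋖ q) : CoverStep p q :=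
  Or.inr (Or.inr hpq)

theorem CoverStep.le [OrderBot α] {p q : α} (hpq : CoverStep p q) : p ≤ q := by
  rcases hpq with rfl | rfl | hpq
  exacts [bot_le, le_rfl, hpq.le]

theorem IsMCoverTuple.coverStep [OrderBot α] {f : Fin m → α} (hf : IsMCoverTuple m f)
    {i j : Fin m} (hij : i ≤ j) : CoverStep (f i) (f j) := by
  obtain ⟨l₀, l₁, l₂, p₁, p₂, -, hp, hf⟩ := hf
  have hij' : (i : ℕ) ≤ j := hij
  rw [hf i, hf j]
  unfold CoverStep
  split_ifs <;> first | omega | simp [hp]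

theorem IsMCoverTuple.monotone [OrderBot α] {f : Fin m → α} (hf : IsMCoverTuple m f) :
    Monotone f :=
  fun _ _ hij => (hf.coverStep hij).le

theorem CoverStep.isMCoverTuple [Finite α] [BoundedOrder α] [Nontrivial α] {p q : α}
    (hpq : CoverStep p q) (k : ℕ) :
    IsMCoverTuple m (fun i : Fin m => if (i : ℕ) < k then p else q) := by
  have const (p : α) : IsMCoverTuple m (fun _ : Fin m => p) := by
    by_cases hp : p = ⊤
    · obtain ⟨c, -, hc⟩ := exists_le_covBy_of_lt (bot_lt_top : (⊥ : α) < ⊤)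
      exact ⟨0, 0, m, c, ⊤, by omega, hc, fun i => by simp [hp]⟩
    · obtain ⟨c, hc, -⟩ := exists_covBy_le_of_lt (lt_top_iff_ne_top.2 hp)
      exact ⟨0, m, 0, p, c, by omega, hc, fun i => by simp⟩
  rcases hpq with rfl | rfl | hpq
  · by_cases hq : q = ⊥
    · simpa [hq] using const ⊥
    · obtain ⟨c, -, hc⟩ := exists_le_covBy_of_lt (bot_lt_iff_ne_bot.2 hq)
      refine ⟨min k m, 0, m - min k m, c, q, by omega, hc, fun i => ?_⟩
      have := i.2
      grind
  · simpa using const p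
  · refine ⟨0, min k m, m - min k m, p, q, by omega, hpq, fun i => ?_⟩
    have := i.2
    simp

/-- The `m`-cover tuple whose first `k` entries are `p` and whose other entries are `q`. -/
def MCover.step [Finite α] [BoundedOrder α] [Nontrivial α] (m k : ℕ) {p q : α}
    (hpq : CoverStep p q) : MCover α m :=
  ⟨fun i => if (i : ℕ) < k then p else q, hpq.isMCoverTuple k⟩

@[simp]
theorem MCover.step_val [Finite α] [BoundedOrder α] [Nontrivial α] (k : ℕ) {p q : α}
    (hpq : CoverStep p q) (i : Fin m) :
    (MCover.step m k hpq).1 i = if (i : ℕ) < k then p else q := rfl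

end MCoverTuple

section LeftModular

variable {β : Type*} [PartialOrder β]

theorem leftModularElt_of_forall {x : β}
    (hx : ∀ y z : β, y < z → (∀ w, w ≤ x → w ≤ z → w ≤ y) →
      ¬ ∀ w, x ≤ w → y ≤ w → z ≤ w) : LeftModularElt x := by
  intro y z hyz j μ l r hj hμ hl hr
  have hjy : y ≤ j := hj.1 (by simp)
  have hjx : x ≤ j := hj.1 (by simp)
  have hμx : μ ≤ x := hμ.1 (by simp)
  have hμz : μ ≤ z := hμ.1 (by simp)
  have hlj : l ≤ j := hl.1 (by simp)
  have hlz : l ≤ z := hl.1 (by simp)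
  have hry : y ≤ r := hr.1 (by simp)
  have hrμ : μ ≤ r := hr.1 (by simp)
  have hrl : r ≤ l := by
    refine hr.2 ?_
    rintro a (rfl | rfl)
    · exact hl.2 (by rintro b (rfl | rfl); exacts [hjy, hyz.le])
    · exact hl.2 (by rintro b (rfl | rfl); exacts [hμx.trans hjx, hμz])
  by_contra hne
  refine hx r l (hrl.lt_of_ne' hne) (fun w hwx hwl => ?_) (fun w hxw hrw => ?_)
  · exact (hμ.2 (by rintro b (rfl | rfl); exacts [hwx, hwl.trans hlz])).trans hrμ
  · exact hlj.trans (hj.2 (by rintro b (rfl | rfl); exacts [hry.trans hrw, hxw]))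

theorem LeftModularElt.not_forall (hβ : IsLatticeOrder β) {x y z : β} (hx : LeftModularElt x)
    (hyz : y < z) (hmeet : ∀ w, w ≤ x → w ≤ z → w ≤ y) :
    ¬ ∀ w, x ≤ w → y ≤ w → z ≤ w := by
  intro hjoin
  obtain ⟨j, hj⟩ := hβ.1 y x
  obtain ⟨μ, hμ⟩ := hβ.2 x z
  have hzj : z ≤ j := hjoin j (hj.1 (by simp)) (hj.1 (by simp))
  have hμy : μ ≤ y := hmeet μ (hμ.1 (by simp)) (hμ.1 (by simp))
  refine hyz.ne' (hx y z hyz j μ z y hj hμ ⟨?_, fun w hw => hw (by simp)⟩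
    ⟨?_, fun w hw => hw (by simp)⟩)
  · rintro b (rfl | rfl)
    exacts [hzj, le_rfl]
  · rintro b (rfl | rfl)
    exacts [le_rfl, hμy]

theorem IsMaxChain.mem_of_forall_le_or_le {C : Set β} (hC : IsMaxChain (· ≤ ·) C) {x : β}
    (hx : ∀ c ∈ C, x ≤ c ∨ c ≤ x) : x ∈ C := by
  rw [hC.2 (hC.1.insert fun c hc _ => hx c hc) (Set.subset_insert x C)]
  exact Set.mem_insert x C

/-- Elements consecutive in a maximal chain form a cover relation. -/
theorem IsMaxChain.covBy {C : Set β} (hC : IsMaxChain (· ≤ ·) C) {x y : β} (hx : x ∈ C)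
    (hy : y ∈ C) (hxy : x < y) (h : ∀ c ∈ C, x < c → ¬ c < y) : x ⋖ y := by
  refine ⟨hxy, fun w hxw hwy => h w (hC.mem_of_forall_le_or_le fun c hc => ?_) hxw hwy⟩
  rcases hC.1.total hc hx with hcx | hxc
  · exact Or.inr (hcx.trans hxw.le)
  · rcases hC.1.total hc hy with hcy | hyc
    · rcases hxc.eq_or_lt with rfl | hxc
      · exact Or.inr hxw.le
      · rcases hcy.eq_or_lt with rfl | hcy
        · exact Or.inl hwy.le
        · exact absurd hcy (h c hc hxc)
    · exact Or.inl (hwy.le.trans hyc)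

end LeftModular

section Tree

variable {α : Type*} [PartialOrder α] [BoundedOrder α]

/-- If the `2`-cover poset is a lattice, every nonzero element has at most one upper cover. -/
theorem covBy_unique_of_isLatticeOrder_two [Finite α] [Nontrivial α] (h : IsLatticeOrder (MCover α 2)) {p q r : α}
    (hp : p ≠ ⊥) (hq : p ⋖ q) (hr : p ⋖ r) : q = r := by
  by_contra hne
  obtain ⟨s, hs⟩ := h.1 (MCover.step 2 1 hq.coverStep)
    (MCover.step 2 1 hr.coverStep)
  have hs₁ : MCover.step 2 1 hq.coverStep ≤ s := hs.1 (by simp)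
  have hs₂ : MCover.step 2 1 hr.coverStep ≤ s := hs.1 (by simp)
  have hp0 : p ≤ s.1 0 := by simpa using hs₁ 0
  have hq1 : q ≤ s.1 1 := by simpa using hs₁ 1
  have hr1 : r ≤ s.1 1 := by simpa using hs₂ 1
  have least {a b : α} (hab : CoverStep a b) (hpa : p ≤ a) (hqb : q ≤ b) (hrb : r ≤ b) :
      s.1 0 ≤ a ∧ s.1 1 ≤ b := by
    have : s ≤ MCover.step 2 1 hab := by
      refine hs.2 ?_
      rintro w (rfl | rfl) i <;> fin_cases i <;> simpa
    exact ⟨by simpa using this 0, by simpa using this 1⟩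
  have lt_of {a b : α} (ha : p ⋖ a) (hb : p ⋖ b) (hab : a ≠ b) (has : a ≤ s.1 1)
      (hbs : b ≤ s.1 1) : a < s.1 1 := by
    refine has.lt_of_ne ?_
    rintro rfl
    exact ha.2 hb.lt (hbs.lt_of_ne hab.symm)
  obtain ⟨a, hqa, ha⟩ := exists_le_covBy_of_lt (lt_of hq hr hne hq1 hr1)
  obtain ⟨b, hrb, hb⟩ := exists_le_covBy_of_lt (lt_of hr hq (Ne.symm hne) hr1 hq1)
  have hsa := (least ha.coverStep (hq.le.trans hqa) hq1 hr1).1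
  have hsb := (least hb.coverStep (hr.le.trans hrb) hq1 hr1).1
  have hcov : s.1 0 ⋖ s.1 1 := by
    rcases s.2.coverStep (show (0 : Fin 2) ≤ 1 by decide) with h0 | h0 | h0
    · exact absurd (le_bot_iff.1 (hp0.trans h0.le)) hp
    · exact absurd (h0 ▸ hsa) ha.lt.not_ge
    · exact h0
  have hsa' : s.1 0 = a := hsa.eq_of_not_lt fun hlt => hcov.2 hlt ha.lt
  have hsb' : s.1 0 = b := hsb.eq_of_not_lt fun hlt => hcov.2 hlt hb.lt
  have hra : r ≤ a := hsa' ▸ hsb'.symm ▸ hrb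
  exact (least (CoverStep.refl a) (hq.le.trans hqa) hqa hra).2.not_gt ha.lt

/-- If upper covers of nonzero elements are unique, the elements above a nonzero element form
a chain. -/
theorem le_or_le_of_covBy_unique [Finite α]
    (hα : ∀ p q r : α, p ≠ ⊥ → p ⋖ q → p ⋖ r → q = r) (p : α) :
    ∀ x y : α, p ≠ ⊥ → p ≤ x → p ≤ y → x ≤ y ∨ y ≤ x := by
  induction p using WellFoundedGT.induction with
  | ind p ih =>
    intro x y hp hx hy
    rcases hx.eq_or_lt with rfl | hx
    · exact Or.inl hy
    rcases hy.eq_or_lt with rfl | hy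
    · exact Or.inr hx.le
    obtain ⟨u, hu, hux⟩ := exists_covBy_le_of_lt hx
    obtain ⟨v, hv, hvy⟩ := exists_covBy_le_of_lt hy
    obtain rfl := hα p u v hp hu hv
    exact ih u hu.lt x y (ne_bot_of_gt hu.lt) hux hvy

/-- A (2+2)-free bounded poset which is a tree above its least element has a maximal chain
containing all elements that are neither `⊥` nor atoms. -/
theorem TwoPlusTwoFree.exists_isMaxChain (hfree : TwoPlusTwoFree α)
    (htree : ∀ p x y : α, p ≠ ⊥ → p ≤ x → p ≤ y → x ≤ y ∨ y ≤ x) :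
    ∃ S : Set α, IsMaxChain (· ≤ ·) S ∧ ∀ p q : α, p ≠ ⊥ → p < q → q ∈ S := by
  have hN : IsChain (· ≤ ·) {q : α | ∃ p, p ≠ ⊥ ∧ p < q} := by
    rintro q ⟨p, hp, hpq⟩ q' ⟨p', hp', hpq'⟩ -
    by_contra hne
    have h₁ : ¬ p ≤ q' := fun hle => hne (htree p q q' hp hpq.le hle)
    have h₂ : ¬ p' ≤ q := fun hle => hne (htree p' q q' hp' hle hpq'.le)
    push Not at hne
    exact hfree ⟨p, q, p', q', hpq, hpq', ⟨fun hle => h₁ (hle.trans hpq'.le),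
      fun hle => h₂ (hle.trans hpq.le)⟩, ⟨h₁, fun hle => hne.2 (hle.trans hpq.le)⟩,
      ⟨fun hle => hne.1 (hle.trans hpq'.le), h₂⟩, hne⟩
  obtain ⟨F, hF⟩ := hN.exists_subset_flag
  exact ⟨F, ⟨F.Chain', fun _ ht hst => F.max_chain' ht hst⟩, fun p q hp hpq => hF ⟨p, hp, hpq⟩⟩

end Tree

section Main

variable {α : Type*} [Finite α] [PartialOrder α] [BoundedOrder α] [Nontrivial α] {m : ℕ}

/-- The tuples of the form `(c, …, c, c', …, c')` for `c`, `c'` equal or consecutive in a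
maximal chain of `α` form a maximal chain of the `m`-cover poset. -/
theorem IsMaxChain.mCover {S : Set α} (hS : IsMaxChain (· ≤ ·) S) :
    IsMaxChain (· ≤ ·) {f : MCover α m |
      (∀ i, f.1 i ∈ S) ∧ ∀ i j, i ≤ j → f.1 i = f.1 j ∨ f.1 i ⋖ f.1 j} := by
  refine ⟨?_, fun T hT hST => hST.antisymm fun f hfT => ?_⟩
  · rintro f ⟨hfS, hf⟩ g ⟨hgS, hg⟩ -
    by_contra hne
    push Not at hne
    obtain ⟨s, hs⟩ : ∃ s, ¬ f.1 s ≤ g.1 s := by simpa [← Subtype.coe_le_coe, Pi.le_def] using hne.1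
    obtain ⟨t, ht⟩ : ∃ t, ¬ g.1 t ≤ f.1 t := by simpa [← Subtype.coe_le_coe, Pi.le_def] using hne.2
    have hs' : g.1 s < f.1 s := ((hS.1.total (hfS s) (hgS s)).resolve_left hs).lt_of_not_ge hs
    have ht' : f.1 t < g.1 t := ((hS.1.total (hgS t) (hfS t)).resolve_left ht).lt_of_not_ge ht
    rcases le_total s t with hst | hst
    · have hlt := hs'.trans_le (f.2.monotone hst)
      rcases hg s t hst with heq | hcov
      · exact absurd (heq ▸ hlt) ht'.not_gt
      · exact hcov.2 hlt ht'
    · have hlt := ht'.trans_le (g.2.monotone hst)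
      rcases hf t s hst with heq | hcov
      · exact absurd (heq ▸ hlt) hs'.not_gt
      · exact hcov.2 hlt hs'
  · have hconst (c : α) (hc : c ∈ S) : (∀ i, f.1 i ≤ c) ∨ ∀ i, c ≤ f.1 i := by
      have hcT : MCover.step m 0 (CoverStep.refl c) ∈ T :=
        hST ⟨fun i => by simpa using hc, fun i j _ => by simp⟩
      rcases hT.total hfT hcT with hle | hle
      · exact Or.inl fun i => by simpa using hle i
      · exact Or.inr fun i => by simpa using hle i
    have hfS (i : Fin m) : f.1 i ∈ S :=
      hS.mem_of_forall_le_or_le fun c hc => (hconst c hc).imp (· i) (· i)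
    refine ⟨hfS, fun i j hij => ?_⟩
    rcases f.2.coverStep hij with hbot | hstep
    · by_cases heq : f.1 i = f.1 j
      · exact Or.inl heq
      · refine Or.inr (hS.covBy (hfS i) (hfS j) ((f.2.monotone hij).lt_of_ne heq) ?_)
        intro c hc hic hcj
        rcases hconst c hc with hle | hle
        · exact (hle j).not_gt hcj
        · exact (hle i).not_gt hic
    · exact hstep

theorem leftModularElt_mCover
    (hcov : ∀ p q r : α, p ≠ ⊥ → p ⋖ q → p ⋖ r → q = r) {S : Set α}
    (hS : IsMaxChain (· ≤ ·) S) (hSmem : ∀ p q : α, p ≠ ⊥ → p < q → q ∈ S) {x : MCover α m}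
    (hxS : ∀ i, x.1 i ∈ S) (hx : ∀ i j, i ≤ j → x.1 i = x.1 j ∨ x.1 i ⋖ x.1 j) :
    LeftModularElt x := by
  refine leftModularElt_of_forall fun y z hyz hmeet hjoin => ?_
  obtain ⟨t, ht⟩ : ∃ t, y.1 t < z.1 t := by
    by_contra! hall
    exact hyz.not_ge fun i => by
      by_contra hlt
      exact hall i (lt_of_le_of_ne (hyz.le i) fun heq => hlt heq.ge)
  have hmeet_t (w : α) (hwx : w ≤ x.1 t) (hwz : w ≤ z.1 t) : w ≤ y.1 t := by
    have key (f : MCover α m) (hf : w ≤ f.1 t) :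
        MCover.step m t (CoverStep.bot_left w) ≤ f := by
      intro i
      by_cases hi : (i : ℕ) < t
      · simp [hi]
      · simpa [hi] using hf.trans (f.2.monotone (not_lt.1 hi))
    simpa using hmeet _ (key x hwx) (key z hwz) t
  have hjoin_t {a b : α} (hab : CoverStep a b) (hxa : x.1 t ≤ a) (hya : y.1 t ≤ a)
      (hxb : ∀ s, t ≤ s → x.1 s ≤ b) (hyb : ∀ s, t ≤ s → y.1 s ≤ b) : z.1 t ≤ a := by
    have key (f : MCover α m) (hfa : f.1 t ≤ a) (hfb : ∀ s, t ≤ s → f.1 s ≤ b) :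
        f ≤ MCover.step m (t + 1) hab := by
      intro i
      by_cases hi : (i : ℕ) < t + 1
      · simpa [hi] using (f.2.monotone (Fin.le_def.2 (Nat.lt_succ_iff.1 hi))).trans hfa
      · simpa [hi] using hfb i (Fin.le_def.2 (by omega))
    simpa using hjoin _ (key x hxa hxb) (key y hya hyb) t
  have hx_le {u : α} (hu : u ∈ S) (hxu : x.1 t < u) (s : Fin m) (hs : t ≤ s) : x.1 s ≤ u := by
    rcases hx t s hs with heq | hc
    · exact heq ▸ hxu.le
    · by_contra hle
      exact hc.2 hxu (((hS.1.total (hxS s) hu).resolve_left hle).lt_of_not_ge hle)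
  have hstep_le (f : MCover α m) {u : α} (hf : f.1 t ≠ ⊥) (hu : f.1 t ⋖ u) (s : Fin m)
      (hs : t ≤ s) : f.1 s ≤ u := by
    rcases f.2.coverStep hs with heq | heq | hc
    · exact absurd heq hf
    · exact heq ▸ hu.le
    · exact (hcov _ _ _ hf hc hu).le
  by_cases hy0 : y.1 t = ⊥
  · by_cases hx0 : x.1 t = ⊥
    · have := hjoin_t (CoverStep.bot_left ⊤) hx0.le hy0.le (fun _ _ => le_top)
        (fun _ _ => le_top)
      exact ht.not_ge (this.trans bot_le)
    · have hz0 : z.1 t ≠ ⊥ := ne_bot_of_gt ht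
      have hxz : ¬ x.1 t ≤ z.1 t := fun hle =>
        hx0 (le_bot_iff.1 (hy0 ▸ hmeet_t _ le_rfl hle))
      have hzx : ¬ z.1 t ≤ x.1 t := fun hle => ht.not_ge (hmeet_t _ hle le_rfl)
      have hzS : z.1 t ∉ S := fun hmem => (hS.1.total hmem (hxS t)).elim hzx hxz
      obtain ⟨u, hu, -⟩ := exists_covBy_le_of_lt
        (lt_top_iff_ne_top.2 fun htop : z.1 t = ⊤ => hxz (htop ▸ le_top))
      have huS : u ∈ S := hSmem _ _ hz0 hu.lt
      have hxu : x.1 t < u := by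
        rcases hS.1.total huS (hxS t) with hle | hle
        · exact absurd (hu.le.trans hle) hzx
        · exact hle.lt_of_ne fun heq => hzx (heq ▸ hu.le)
      obtain ⟨v, hxv, hv⟩ := (Set.toFinite {v : α | v ∈ S ∧ v < u}).exists_le_maximal
        (⟨hxS t, hxu⟩ : x.1 t ∈ {v : α | v ∈ S ∧ v < u})
      have hvu : v ⋖ u := hS.covBy hv.prop.1 huS hv.prop.2 fun c hc hvc hcu =>
        hv.not_prop_of_gt hvc ⟨hc, hcu⟩
      have hzv : z.1 t ≤ v := hjoin_t hvu.coverStep hxv (hy0 ▸ bot_le)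
        (hx_le huS hxu) fun s hs => (hyz.le s).trans (hstep_le z hz0 hu s hs)
      exact hu.2 (hzv.lt_of_ne fun heq => hzS (heq ▸ hv.prop.1)) hvu.lt
  · have hzS : z.1 t ∈ S := hSmem _ _ hy0 ht
    have hxz : x.1 t ≤ z.1 t := (hS.1.total (hxS t) hzS).resolve_right fun hle =>
      ht.not_ge (hmeet_t _ hle le_rfl)
    have hxy : x.1 t ≤ y.1 t := hmeet_t _ le_rfl hxz
    obtain ⟨u, hu, -⟩ := exists_covBy_le_of_lt ht
    exact ht.not_ge (hjoin_t hu.coverStep hxy le_rfl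
      (hx_le (hSmem _ _ hy0 hu.lt) (hxy.trans_lt hu.lt)) (hstep_le y hy0 hu))

/-- A maximal chain of the `m`-cover poset contains a tuple whose last entry is an atom. -/
theorem IsMaxChain.exists_isAtom_last {n : ℕ} {C : Set (MCover α (n + 1))}
    (hC : IsMaxChain (· ≤ ·) C) : ∃ c ∈ C, IsAtom (c.1 (Fin.last n)) := by
  have last_ne (c : MCover α (n + 1)) {i : Fin (n + 1)} (hi : c.1 i ≠ ⊥) :
      c.1 (Fin.last n) ≠ ⊥ := fun h0 =>
    hi (le_bot_iff.1 (h0 ▸ c.2.monotone (Fin.le_last i)))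
  have htop : MCover.step (n + 1) 0 (CoverStep.refl (⊤ : α)) ∈ C :=
    hC.mem_of_forall_le_or_le fun c _ => Or.inr fun i => by simp
  obtain ⟨c, -, hc⟩ :=
    (Set.toFinite {c | c ∈ C ∧ c.1 (Fin.last n) ≠ ⊥}).exists_le_minimal
    (⟨htop, by simp⟩ : _ ∈ {c | c ∈ C ∧ c.1 (Fin.last n) ≠ ⊥})
  refine ⟨c, hc.prop.1, hc.prop.2, fun a ha => ?_⟩
  by_contra ha0
  set f : MCover α (n + 1) := MCover.step (n + 1) n (CoverStep.bot_left a) with hf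
  have hfc : f ≤ c := by
    intro i
    by_cases hi : (i : ℕ) < n
    · simp [hf, hi]
    · have : i = Fin.last n := Fin.ext (by have := i.2; simp; omega)
      subst this
      simpa [hf] using ha.le
  have hfC : f ∈ C := by
    refine hC.mem_of_forall_le_or_le fun d hd => ?_
    by_cases hd0 : d.1 (Fin.last n) = ⊥
    · refine Or.inr fun i => ?_
      have : d.1 i = ⊥ := by
        by_contra hi
        exact last_ne d hi hd0
      simp [this]
    · refine Or.inl (hfc.trans ?_)
      rcases hC.1.total hd hc.prop.1 with hle | hle
      · exact hc.le_of_le ⟨hd, hd0⟩ hle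
      · exact hle
  have := hc.le_of_le ⟨hfC, by simpa [hf] using ha0⟩ hfc (Fin.last n)
  exact ha.not_ge (by simpa [hf] using this)

/-- The last entry `a` of a left-modular tuple, if it is an atom, lies below every element that
is neither `⊥` nor an atom. -/
theorem LeftModularElt.last_le {n : ℕ}
    (htree : ∀ p x y : α, p ≠ ⊥ → p ≤ x → p ≤ y → x ≤ y ∨ y ≤ x)
    (hlat : IsLatticeOrder (MCover α (n + 1))) {c : MCover α (n + 1)} (hc : LeftModularElt c)
    (ha : IsAtom (c.1 (Fin.last n))) {x y : α} (hx : x ≠ ⊥) (hxy : x < y) :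
    c.1 (Fin.last n) ≤ y := by
  by_contra hay
  have step_le {p : α} {w : MCover α (n + 1)} (hw : p ≤ w.1 (Fin.last n)) :
      MCover.step (n + 1) n (CoverStep.bot_left p) ≤ w := by
    intro i
    by_cases hi : (i : ℕ) < n
    · simp [hi]
    · have : i = Fin.last n := Fin.ext (by have := i.2; simp; omega)
      subst this
      simpa using hw
  refine hc.not_forall hlat
    (y := MCover.step (n + 1) n (CoverStep.bot_left x))
    (z := MCover.step (n + 1) n (CoverStep.bot_left y)) ?_ ?_ ?_
  · refine lt_of_le_not_ge (step_le (by simpa using hxy.le)) fun hle => ?_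
    exact hxy.not_ge (by simpa using hle (Fin.last n))
  · intro w hwc hwy
    have hw : w.1 (Fin.last n) = ⊥ := by
      rcases ha.le_iff.1 (hwc (Fin.last n)) with h0 | h0
      · exact h0
      · exact absurd (h0 ▸ by simpa using hwy (Fin.last n)) hay
    intro i
    rw [le_bot_iff.1 ((w.2.monotone (Fin.le_last i)).trans hw.le)]
    exact bot_le
  · intro w hcw hxw
    have hxw' : x ≤ w.1 (Fin.last n) := by simpa using hxw (Fin.last n)
    refine step_le ((htree x _ _ hx hxy.le hxw').resolve_right fun hle => ?_)
    exact hay ((hcw (Fin.last n)).trans hle)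

end Main

/-- If all the m-cover posets of `P` are lattices, then for every `m > 0` the lattice
`P^⟨m⟩` is left-modular if and only if `P` is (2+2)-free. -/
theorem stmt_2 {α : Type*} [Fintype α] [PartialOrder α] [BoundedOrder α]
    (h : ∀ m : ℕ, 0 < m → IsLatticeOrder (MCover α m)) :
    ∀ m : ℕ, 0 < m → (IsLeftModularLattice (MCover α m) ↔ TwoPlusTwoFree α) := by
  intro m hm
  rcases subsingleton_or_nontrivial α with hα | hα
  · have : IsEmpty (MCover α m) :=
      ⟨fun ⟨_, _, _, _, p, q, _, hpq, _⟩ => hpq.ne (Subsingleton.elim p q)⟩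
    refine ⟨fun _ ⟨x, y, _, _, hxy, _⟩ => hxy.ne (Subsingleton.elim x y), fun _ => ?_⟩
    exact ⟨∅, ⟨IsChain.empty, fun _ _ _ => Subsingleton.elim _ _⟩, fun x => isEmptyElim x⟩
  have hcov : ∀ p q r : α, p ≠ ⊥ → p ⋖ q → p ⋖ r → q = r := fun _ _ _ =>
    covBy_unique_of_isLatticeOrder_two (h 2 two_pos)
  have htree := le_or_le_of_covBy_unique hcov
  constructor
  · rintro ⟨C, hC, hCmod⟩ ⟨x, y, x', y', hxy, hxy', hxx', -, -, hyy'⟩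
    obtain ⟨n, rfl⟩ := Nat.exists_eq_succ_of_ne_zero hm.ne'
    obtain ⟨c, hc, ha⟩ := hC.exists_isAtom_last
    have hx : x ≠ ⊥ := fun h0 => hxx'.1 (h0 ▸ bot_le)
    have hx' : x' ≠ ⊥ := fun h0 => hxx'.2 (h0 ▸ bot_le)
    exact (htree _ y y' ha.1 ((hCmod c hc).last_le htree (h _ hm) ha hx hxy)
      ((hCmod c hc).last_le htree (h _ hm) ha hx' hxy')).elim hyy'.1 hyy'.2
  · intro hfree
    obtain ⟨S, hS, hSmem⟩ := hfree.exists_isMaxChain htree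
    exact ⟨_, hS.mCover, fun x hx => leftModularElt_mCover hcov hS hSmem hx.1 hx.2⟩
end

section
/- For all integers m, n > 0, the m-Tamari lattice T_n^(m) is order-isomorphic to the Dedekind–MacNeille completion DM(T_n^⟨m⟩) of the m-cover poset T_n^⟨m⟩ of the Tamari lattice T_n = T_n^(1). -/
/-- The set `D_n^(m)` of m-Dyck paths of length `(m+1)n`, encoded as step sequences:
weakly increasing `u : Fin n → ℕ` with `u_k ≤ m(k−1)` (1-indexed), i.e. `u k ≤ m·k`
(0-indexed). -/
def DyckM (m n : ℕ) : Type :=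
  {u : Fin n → ℕ // Monotone u ∧ ∀ k : Fin n, u k ≤ m * (k : ℕ)}

/-- The rotation cover relation on step sequences: `v` is obtained from `u` by choosing a
position `i ≥ 2` (1-indexed; here `i ≥ 1`, 0-indexed) with `u_{i−1} < u_i` and
decreasing every entry of the primitive subsequence of `u` at position `i` (which ends
at position `k`) by one. -/
def RotCovBy (m n : ℕ) (u v : Fin n → ℕ) : Prop :=
  ∃ i k : Fin n, (0 : ℕ) < (i : ℕ) ∧ (i : ℕ) ≤ (k : ℕ) ∧
    (∀ j : Fin n, (j : ℕ) + 1 = (i : ℕ) → u j < u i) ∧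
    (∀ j : Fin n, (i : ℕ) < (j : ℕ) → (j : ℕ) ≤ (k : ℕ) →
      u j - u i < m * ((j : ℕ) - (i : ℕ))) ∧
    ((k : ℕ) + 1 = n ∨
      ∀ j : Fin n, (j : ℕ) = (k : ℕ) + 1 → m * ((j : ℕ) - (i : ℕ)) ≤ u j - u i) ∧
    (∀ j : Fin n, v j = if (i : ℕ) ≤ (j : ℕ) ∧ (j : ℕ) ≤ (k : ℕ) then u j - 1 else u j)

/-- The rotation order `≤_rot` on `D_n^(m)`: the reflexive-transitive closure of the
rotation cover relation.  The m-Tamari lattice is `T_n^(m) = (D_n^(m), ≤_rot)`. -/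
def TamariLe (m n : ℕ) : DyckM m n → DyckM m n → Prop :=
  Relation.ReflTransGen (fun a b => RotCovBy m n a.1 b.1)

/-- `b` covers `a` with respect to the relation `r` (playing the role of `≤`). -/
def RelCovBy {β : Type*} (r : β → β → Prop) (a b : β) : Prop :=
  r a b ∧ a ≠ b ∧ ∀ c, r a c → r c b → c = a ∨ c = b

/-- `x` is meet-irreducible w.r.t. the order relation `r`: non-maximal with exactly one
upper cover. -/
def RelMeetIrred {β : Type*} (r : β → β → Prop) (x : β) : Prop :=
  (∃ y, r x y ∧ x ≠ y) ∧ ∃! y, RelCovBy r x y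

/-- `x` is join-irreducible w.r.t. the order relation `r`: non-minimal with exactly one
lower cover. -/
def RelJoinIrred {β : Type*} (r : β → β → Prop) (x : β) : Prop :=
  (∃ y, r y x ∧ x ≠ y) ∧ ∃! y, RelCovBy r y x

/-- The defining shape of elements of the m-cover poset of the Tamari lattice `T_n`:
tuples `(0̂^{l₀}, p₁^{l₁}, p₂^{l₂})` with `p₁ ⋖ p₂` a cover relation of `T_n` and `0̂`
the least element of `T_n`. -/
def IsTamariCoverTuple (m n : ℕ) (f : Fin m → DyckM 1 n) : Prop :=
  ∃ (z : DyckM 1 n) (l₀ l₁ l₂ : ℕ) (p₁ p₂ : DyckM 1 n),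
    (∀ x, TamariLe 1 n z x) ∧ l₀ + l₁ + l₂ = m ∧ RelCovBy (TamariLe 1 n) p₁ p₂ ∧
    ∀ i : Fin m, f i = if (i : ℕ) < l₀ then z else if (i : ℕ) < l₀ + l₁ then p₁ else p₂

/-- The m-cover poset `T_n^⟨m⟩` of the Tamari lattice `T_n`. -/
def TamariMCover (m n : ℕ) : Type :=
  {f : Fin m → DyckM 1 n // IsTamariCoverTuple m n f}

/-- The componentwise order on the m-cover poset `T_n^⟨m⟩`. -/
def TamariMCoverLe (m n : ℕ) (f g : TamariMCover m n) : Prop :=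
  ∀ i : Fin m, TamariLe 1 n (f.1 i) (g.1 i)

/-- For a set `A` in a poset with order relation `r`, the set of upper bounds of `A`. -/
def relUpperBounds {β : Type*} (r : β → β → Prop) (A : Set β) : Set β :=
  {x | ∀ a ∈ A, r a x}

/-- For a set `A` in a poset with order relation `r`, the set of lower bounds of `A`. -/
def relLowerBounds {β : Type*} (r : β → β → Prop) (A : Set β) : Set β :=
  {x | ∀ a ∈ A, r x a}

/-- The Dedekind–MacNeille completion of the poset with carrier `β` and order `r`: the
sets `A` with `(A^u)^l = A`, ordered by inclusion. -/
def DMCut {β : Type*} (r : β → β → Prop) : Type _ :=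
  {A : Set β // relLowerBounds r (relUpperBounds r A) = A}

/-- The height `m·i − u i` of the `i`-th up step of the path with step sequence `u`. -/
def DyckM.height {m n : ℕ} (u : DyckM m n) (i : Fin n) : ℕ := m * (i : ℕ) - u.1 i

namespace DyckM

variable {m n : ℕ}

lemma add_height (u : DyckM m n) (i : Fin n) : u.1 i + u.height i = m * (i : ℕ) :=
  Nat.add_sub_cancel' (u.2.2 i)

lemma ext_height {u v : DyckM m n} (h : ∀ i, u.height i = v.height i) : u = v := by
  refine Subtype.ext (funext fun i => ?_)
  have h₁ := u.add_height i
  have h₂ := v.add_height i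
  have := h i
  omega

lemma height_succ_le (u : DyckM m n) {i j : Fin n} (hij : (j : ℕ) = (i : ℕ) + 1) :
    u.height j ≤ u.height i + m := by
  have h₁ := u.add_height i
  have h₂ := u.add_height j
  have h₃ : u.1 i ≤ u.1 j := u.2.1 (by rw [Fin.le_def]; omega)
  rw [hij, Nat.mul_add, Nat.mul_one] at h₂
  omega

/-- Between the `i`-th and the `k`-th up step the path stays above height `u.height i + s`. -/
def StaysAbove (u : DyckM m n) (i : Fin n) (s : ℕ) (k : Fin n) : Prop :=
  ∀ j, i < j → j ≤ k → u.height i + s < u.height j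

lemma StaysAbove.mono {u : DyckM m n} {i k k' : Fin n} {s : ℕ} (h : u.StaysAbove i s k)
    (hk : k' ≤ k) : u.StaysAbove i s k' :=
  fun j hij hjk => h j hij (hjk.trans hk)

lemma staysAbove_self (u : DyckM m n) (i : Fin n) (s : ℕ) : u.StaysAbove i s i :=
  fun _ hij hji => absurd hij hji.not_gt

open Classical in
/-- The bracket matrix of an `m`-Dyck path: the entry at `(i, s)` is the index of the last up step
before the path first returns to height `u.height i + s` after the `i`-th up step. -/
noncomputable def bracket (u : DyckM m n) (i : Fin n) (s : Fin m) : Fin n :=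
  (Finset.univ.filter fun k => u.StaysAbove i s k).max'
    ⟨i, by simpa using u.staysAbove_self i s⟩

lemma le_bracket_iff (u : DyckM m n) {i k : Fin n} {s : Fin m} :
    k ≤ u.bracket i s ↔ u.StaysAbove i s k := by
  classical
  constructor
  · intro h
    have hmem := Finset.max'_mem (Finset.univ.filter fun k => u.StaysAbove i s k)
      ⟨i, by simpa using u.staysAbove_self i s⟩
    exact (Finset.mem_filter.1 hmem).2.mono h
  · intro h
    exact Finset.le_max' _ _ (by simpa using h)

lemma bracket_le_iff (u v : DyckM m n) :
    u.bracket ≤ v.bracket ↔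
      ∀ i (s : Fin m) k, u.StaysAbove i s k → v.StaysAbove i s k := by
  constructor
  · intro h i s k hk
    exact v.le_bracket_iff.1 ((u.le_bracket_iff.2 hk).trans (h i s))
  · intro h i s
    exact v.le_bracket_iff.2 (h i s _ (u.le_bracket_iff.1 le_rfl))

/-- At the first position where two paths may differ, the order of bracket matrices forces the
order of heights. -/
lemma height_le_of_bracket_le {u v : DyckM m n} (h : u.bracket ≤ v.bracket) (j : Fin n)
    (hj : ∀ l < j, u.height l = v.height l) : u.height j ≤ v.height j := by
  by_contra! hlt
  have hj0 : (0 : ℕ) < (j : ℕ) := by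
    rcases Nat.eq_zero_or_pos (j : ℕ) with h0 | h0
    · have := u.add_height j
      rw [h0, Nat.mul_zero] at this
      omega
    · exact h0
  let S := Finset.univ.filter fun i : Fin n => i < j ∧ u.height i ≤ v.height j
  have hS : S.Nonempty := by
    refine ⟨⟨0, by omega⟩, ?_⟩
    have := u.add_height ⟨0, by omega⟩
    simp only [Nat.mul_zero] at this
    simp only [S, Finset.mem_filter, Finset.mem_univ, true_and, Fin.lt_def]
    omega
  obtain ⟨i, hi⟩ : ∃ i, i = S.max' hS := ⟨_, rfl⟩
  have hmem : i ∈ S := hi ▸ S.max'_mem hS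
  simp only [S, Finset.mem_filter, Finset.mem_univ, true_and] at hmem
  have hmax : ∀ l, i < l → l ≤ j → v.height j < u.height l := by
    intro l hil hlj
    rcases hlj.eq_or_lt with rfl | hlj
    · exact hlt
    · by_contra! hc
      have : l ≤ i := hi ▸ S.le_max' l (by simp [S, hlj, hc])
      exact absurd hil this.not_gt
  have hij : (i : ℕ) < (j : ℕ) := hmem.1
  have hstep := u.height_succ_le (i := i) (j := ⟨i + 1, by omega⟩) rfl
  have hnext := hmax ⟨i + 1, by omega⟩ (by simp [Fin.lt_def]) (by rw [Fin.le_def]; simpa using hij)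
  have hv := (bracket_le_iff u v).1 h i ⟨v.height j - u.height i, by omega⟩ j
    (fun l hil hlj => by have := hmax l hil hlj; simp only; omega) j hmem.1 le_rfl
  have := hj i hmem.1
  simp only at hv
  omega

lemma bracket_injective : Function.Injective (bracket : DyckM m n → Fin n → Fin m → Fin n) := by
  intro u v h
  refine ext_height fun i => ?_
  induction i using WellFoundedLT.induction with
  | _ i ih =>
    exact le_antisymm (height_le_of_bracket_le h.le i ih)
      (height_le_of_bracket_le h.ge i fun l hl => (ih l hl).symm)

lemma bracket_le_of_rotCovBy {u v : DyckM m n} (h : RotCovBy m n u.1 v.1) :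
    u.bracket ≤ v.bracket := by
  obtain ⟨i, k, hi0, hik, hprev, hin, hend, hv⟩ := h
  have hpos : 0 < u.1 i := by
    have := hprev ⟨i - 1, by omega⟩ (by simp only; omega)
    omega
  have hheight : ∀ j, v.height j = if i ≤ j ∧ j ≤ k then u.height j + 1 else u.height j := by
    intro j
    have h₁ := u.add_height j
    have h₂ := v.add_height j
    have h₃ := hv j
    simp only [← Fin.le_def] at h₃
    split_ifs at h₃ ⊢ with hc
    · have := u.2.1 hc.1
      omega
    · omega
  have hinside : ∀ j, i ≤ j → j ≤ k → u.height i ≤ u.height j := by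
    intro j hij hjk
    rcases hij.eq_or_lt with rfl | hij
    · exact le_rfl
    · have h₁ := hin j hij hjk
      have h₂ := u.add_height i
      have h₃ := u.add_height j
      have h₄ := u.2.1 hij.le
      rw [Nat.mul_sub] at h₁
      omega
  have hafter : ∀ l : Fin n, (l : ℕ) = k + 1 → u.height l ≤ u.height i := by
    intro l hl
    rcases hend with hend | hend
    · omega
    · have h₁ := hend l hl
      have h₂ := u.add_height i
      have h₃ := u.add_height l
      have h₄ : u.1 i ≤ u.1 l := u.2.1 (by rw [Fin.le_def]; omega)
      have h₅ : m * (i : ℕ) ≤ m * (l : ℕ) := Nat.mul_le_mul_left _ (by omega)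
      rw [Nat.mul_sub] at h₁
      omega
  rw [bracket_le_iff]
  intro a s l hl j haj hjl
  have hj := hl j haj hjl
  rw [hheight a, hheight j]
  by_cases ha : i ≤ a ∧ a ≤ k
  · have hjk : j ≤ k := by
      by_contra! hkj
      have hkj' : (k : ℕ) < j := hkj
      have h₁ := hl ⟨k + 1, by omega⟩
        (by have : (a : ℕ) ≤ k := ha.2
            rw [Fin.lt_def]; simp only; omega)
        (by have : (j : ℕ) ≤ l := hjl
            rw [Fin.le_def]; simp only; omega)
      have h₂ := hafter ⟨k + 1, by omega⟩ rfl
      have h₃ := hinside a ha.1 ha.2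
      omega
    rw [if_pos ha, if_pos ⟨ha.1.trans haj.le, hjk⟩]
    omega
  · rw [if_neg ha]
    split_ifs <;> omega

lemma exists_rotCovBy (hm : 0 < m) {u v : DyckM m n} (h : u.bracket ≤ v.bracket) (hne : u ≠ v) :
    ∃ w : DyckM m n, RotCovBy m n u.1 w.1 ∧ w.bracket ≤ v.bracket ∧
      ∑ i, w.1 i < ∑ i, u.1 i := by
  obtain ⟨j, hjne, hjmin⟩ : ∃ j, u.height j ≠ v.height j ∧
      ∀ l < j, u.height l = v.height l := by
    have hex : ∃ j, u.height j ≠ v.height j := by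
      by_contra! hc
      exact hne (ext_height hc)
    obtain ⟨j, hj, hmin⟩ := WellFounded.has_min (wellFounded_lt (α := Fin n))
      {j | u.height j ≠ v.height j} hex
    exact ⟨j, hj, fun l hl => by_contra fun hc => hmin l hc hl⟩
  have hlt : u.height j < v.height j := lt_of_le_of_ne (height_le_of_bracket_le h j hjmin) hjne
  have huv : v.1 j < u.1 j := by
    have := u.add_height j
    have := v.add_height j
    omega
  have hprev : ∀ a < j, u.1 a < u.1 j := by
    intro a ha
    have h₁ := u.add_height a
    have h₂ := v.add_height a
    have h₃ := hjmin a ha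
    have h₄ := v.2.1 ha.le
    omega
  obtain ⟨k, hk⟩ : ∃ k, k = u.bracket j ⟨0, hm⟩ := ⟨_, rfl⟩
  have hin : u.StaysAbove j 0 k := u.le_bracket_iff.1 hk.le
  have hjk : j ≤ k := hk ▸ u.le_bracket_iff.2 (u.staysAbove_self j _)
  have hafter : ∀ l : Fin n, (l : ℕ) = k + 1 → u.height l ≤ u.height j := by
    intro l hl
    by_contra! hc
    have : l ≤ k := hk ▸ u.le_bracket_iff.2 (fun a hja hal => by
      rcases hal.eq_or_lt with rfl | hal
      · exact hc
      · exact hin a hja (by rw [Fin.le_def]; rw [Fin.lt_def] at hal; omega))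
    rw [Fin.le_def] at this
    omega
  let w : DyckM m n := ⟨fun l => if (j : ℕ) ≤ l ∧ (l : ℕ) ≤ k then u.1 l - 1 else u.1 l, by
    constructor
    · intro a b hab
      have h₁ := u.2.1 hab
      have hab' : (a : ℕ) ≤ b := hab
      dsimp only
      split_ifs with ha hb hb
      · omega
      · omega
      · have h₂ := hprev a (by rw [Fin.lt_def]; omega)
        have h₃ := u.2.1 (show j ≤ b from hb.1)
        omega
      · exact h₁
    · intro l
      have := u.2.2 l
      dsimp only
      split_ifs <;> omega⟩
  have hw : ∀ l, w.height l = if j ≤ l ∧ l ≤ k then u.height l + 1 else u.height l := by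
    intro l
    have h₁ := u.add_height l
    have h₂ := w.add_height l
    have h₃ : w.1 l = if j ≤ l ∧ l ≤ k then u.1 l - 1 else u.1 l := rfl
    split_ifs at h₃ ⊢ with hc
    · have := u.2.1 hc.1
      omega
    · omega
  refine ⟨w, ⟨j, k, ?_, hjk, ?_, ?_, ?_, fun l => rfl⟩, ?_, ?_⟩
  · rcases Nat.eq_zero_or_pos (j : ℕ) with h0 | h0
    · have := u.add_height j
      rw [h0, Nat.mul_zero] at this
      omega
    · exact h0
  · intro a ha
    exact hprev a (by rw [Fin.lt_def]; omega)
  · intro a hja hak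
    have h₁ := hin a hja hak
    have h₂ := u.add_height j
    have h₃ := u.add_height a
    have h₄ := u.2.1 (show j ≤ a from hja.le)
    rw [Nat.mul_sub]
    omega
  · by_cases hkn : (k : ℕ) + 1 = n
    · exact Or.inl hkn
    · refine Or.inr fun l hl => ?_
      have h₁ := hafter l hl
      have h₂ := u.add_height j
      have h₃ := u.add_height l
      rw [Nat.mul_sub]
      omega
  · rw [bracket_le_iff] at h ⊢
    intro a s l hl
    by_cases haj : a < j
    · have hwa : w.height a = u.height a := by
        rw [hw, if_neg]
        exact fun hc => absurd haj hc.1.not_gt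
      by_cases hs : l < j ∨ u.height a + s < u.height j
      · refine h a s l fun b hab hbl => ?_
        have h₁ := hl b hab hbl
        rw [hwa, hw b] at h₁
        split_ifs at h₁ with hb
        · rcases hs with hs | hs
          · exact absurd (hbl.trans_lt hs) hb.1.not_gt
          · rcases hb.1.eq_or_lt with rfl | hjb
            · exact hs
            · have := hin b hjb hb.2
              omega
        · exact h₁
      · push Not at hs
        have hlk : l ≤ k := by
          by_contra! hkl
          have hkl' : (k : ℕ) < l := hkl
          have hjk' : (j : ℕ) ≤ k := hjk
          have haj' : (a : ℕ) < j := haj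
          have h₁ := hl ⟨k + 1, by omega⟩ (by rw [Fin.lt_def]; simp only; omega)
            (by rw [Fin.le_def]; simp only; omega)
          have h₂ := hafter ⟨k + 1, by omega⟩ rfl
          rw [hwa, hw, if_neg (by simp [Fin.le_def])] at h₁
          omega
        have hva := hjmin a haj
        have hj₁ := hl j haj hs.1
        rw [hwa, hw, if_pos ⟨le_rfl, hjk⟩] at hj₁
        intro b hab hbl
        rcases lt_trichotomy b j with hbj | rfl | hjb
        · have h₁ := hl b hab hbl
          rw [hwa, hw b, if_neg fun hc => absurd hbj hc.1.not_gt] at h₁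
          rw [← hjmin b hbj, ← hva]
          exact h₁
        · omega
        · have := h j ⟨0, hm⟩ l (hin.mono hlk) b hjb hbl
          simp only at this
          omega
    · push Not at haj
      refine h a s l fun b hab hbl => ?_
      have h₁ := hl b hab hbl
      rw [hw a, hw b] at h₁
      have hjb : j ≤ b := haj.trans hab.le
      have hba : b ≤ k → a ≤ k := hab.le.trans
      split_ifs at h₁ with ha hb hb
      · omega
      · omega
      · exact absurd ⟨haj, hba hb.2⟩ ha
      · exact h₁
  · refine Finset.sum_lt_sum (fun l _ => ?_) ⟨j, Finset.mem_univ j, ?_⟩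
    · change (if _ then _ else _) ≤ _
      split_ifs
      exacts [Nat.sub_le _ _, le_rfl]
    · change (if (j : ℕ) ≤ j ∧ (j : ℕ) ≤ k then u.1 j - 1 else u.1 j) < _
      rw [if_pos ⟨le_rfl, hjk⟩]
      omega

theorem tamariLe_iff_bracket_le (hm : 0 < m) (u v : DyckM m n) :
    TamariLe m n u v ↔ u.bracket ≤ v.bracket := by
  constructor
  · intro h
    induction h with
    | refl => exact le_rfl
    | tail _ hcov ih => exact ih.trans (bracket_le_of_rotCovBy hcov)
  · induction hN : ∑ i, u.1 i using Nat.strong_induction_on generalizing u with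
    | _ N ih =>
      intro h
      by_cases huv : u = v
      · exact huv ▸ Relation.ReflTransGen.refl
      · obtain ⟨w, hcov, hwv, hlt⟩ := exists_rotCovBy hm h huv
        exact Relation.ReflTransGen.head hcov (ih _ (hN ▸ hlt) w rfl hwv)

end DyckM

/-- The matrices that arise as bracket matrices of `m`-Dyck paths. -/
structure IsBracketMatrix {m n : ℕ} (K : Fin n → Fin m → Fin n) : Prop where
  le_apply : ∀ i s, i ≤ K i s
  antitone : ∀ i, Antitone (K i)
  nested : ∀ i j s t, i < j → j ≤ K i s → K j t ≤ K i s

namespace DyckM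

variable {m n : ℕ}

lemma isBracketMatrix_bracket (u : DyckM m n) : IsBracketMatrix u.bracket where
  le_apply i s := u.le_bracket_iff.2 (u.staysAbove_self i s)
  antitone i s t hst := u.le_bracket_iff.2 fun j hij hj => by
    have := u.le_bracket_iff.1 le_rfl j hij hj
    have : (s : ℕ) ≤ t := hst
    omega
  nested i j s t hij hj := by
    rw [u.le_bracket_iff] at hj ⊢
    intro b hib hb
    rcases le_or_gt b j with hbj | hjb
    · exact hj b hib hbj
    · have h₁ := u.le_bracket_iff.1 hb b hjb le_rfl
      have h₂ := hj j hij le_rfl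
      omega

lemma card_filter_fst (a b : ℕ) (hb : b ≤ n) :
    (Finset.univ.filter fun x : Fin n × Fin m => a ≤ (x.1 : ℕ) ∧ (x.1 : ℕ) < b).card =
      m * (b - a) := by
  have h₁ : (Finset.univ.filter fun x : Fin n × Fin m => a ≤ (x.1 : ℕ) ∧ (x.1 : ℕ) < b) =
      (Finset.univ.filter fun x : Fin n => a ≤ (x : ℕ) ∧ (x : ℕ) < b) ×ˢ Finset.univ := by
    ext x; simp
  have h₂ : (Finset.univ.filter fun x : Fin n => a ≤ (x : ℕ) ∧ (x : ℕ) < b).card = b - a := by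
    rw [← Finset.card_map Fin.valEmbedding, ← Nat.card_Ico]
    congr 1
    ext x
    simp only [Finset.mem_map, Finset.mem_filter, Finset.mem_univ, true_and,
      Fin.valEmbedding_apply, Finset.mem_Ico]
    exact ⟨fun ⟨y, hy, hyx⟩ => hyx ▸ hy, fun hx => ⟨⟨x, by omega⟩, hx, rfl⟩⟩
  rw [h₁, Finset.card_product, h₂, Finset.card_univ, Fintype.card_fin, Nat.mul_comm]

lemma card_filter_snd (i : Fin n) (c : ℕ) (hc : c ≤ m) :
    (Finset.univ.filter fun x : Fin n × Fin m => x.1 = i ∧ (x.2 : ℕ) < c).card = c := by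
  have h₁ : (Finset.univ.filter fun x : Fin n × Fin m => x.1 = i ∧ (x.2 : ℕ) < c) =
      {i} ×ˢ (Finset.univ.filter fun s : Fin m => (s : ℕ) < c) := by
    ext x
    simp only [Finset.mem_filter, Finset.mem_univ, true_and, Finset.mem_product,
      Finset.mem_singleton]
  rw [h₁, Finset.card_product, Finset.card_singleton, one_mul, Fin.card_filter_val_lt,
    min_eq_right hc]

theorem exists_bracket_eq {K : Fin n → Fin m → Fin n} (hK : IsBracketMatrix K) :
    ∃ u : DyckM m n, u.bracket = K := by
  let F : ℕ → Finset (Fin n × Fin m) := fun j =>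
    Finset.univ.filter fun x => (K x.1 x.2 : ℕ) < j
  have hle : ∀ (a : Fin n) (s : Fin m), (a : ℕ) ≤ K a s := hK.le_apply
  let u : DyckM m n := ⟨fun j => (F j).card, by
    constructor
    · intro a b hab
      refine Finset.card_le_card fun x hx => ?_
      simp only [F, Finset.mem_filter, Finset.mem_univ, true_and] at hx ⊢
      exact hx.trans_le hab
    · intro j
      refine (Finset.card_le_card fun x hx => ?_).trans
        (card_filter_fst (m := m) (n := n) 0 j j.2.le).le
      simp only [F, Finset.mem_filter, Finset.mem_univ, true_and] at hx ⊢
      have := hle x.1 x.2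
      omega⟩
  have hu : ∀ j, u.1 j = (F j).card := fun _ => rfl
  have hin : ∀ i s j, i < j → j ≤ K i s → u.height i + s < u.height j := by
    intro i s j hij hj
    have hij' : (i : ℕ) < j := hij
    have hj' : (j : ℕ) ≤ K i s := hj
    have hsub : F j ∪ (Finset.univ.filter fun x : Fin n × Fin m => x.1 = i ∧ (x.2 : ℕ) < s + 1) ⊆
        F i ∪ Finset.univ.filter fun x : Fin n × Fin m => (i : ℕ) ≤ x.1 ∧ (x.1 : ℕ) < j := by
      rintro ⟨a, t⟩ hx
      simp only [F, Finset.mem_union, Finset.mem_filter, Finset.mem_univ, true_and] at hx ⊢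
      rcases hx with hx | ⟨rfl, -⟩
      · by_contra! hc
        have h₁ := hle a t
        have hai : a < i := by
          by_contra! hia
          have := hc.2 hia
          omega
        have : K i s ≤ K a t := hK.nested a i t s hai hc.1
        rw [Fin.le_def] at this
        omega
      · exact Or.inr ⟨le_rfl, hij'⟩
    have hdisj : Disjoint (F j)
        (Finset.univ.filter fun x : Fin n × Fin m => x.1 = i ∧ (x.2 : ℕ) < s + 1) := by
      rw [Finset.disjoint_left]
      rintro ⟨a, t⟩ hx hx'
      simp only [F, Finset.mem_filter, Finset.mem_univ, true_and] at hx hx'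
      obtain ⟨rfl, ht⟩ := hx'
      have : K a s ≤ K a t := hK.antitone a (by rw [Fin.le_def]; omega)
      rw [Fin.le_def] at this
      omega
    have hcard := (Finset.card_le_card hsub).trans (Finset.card_union_le _ _)
    rw [Finset.card_union_of_disjoint hdisj, card_filter_snd i _ s.2, card_filter_fst _ _ j.2.le,
      ← hu, ← hu, Nat.mul_sub] at hcard
    have h₁ := u.add_height i
    have h₂ := u.add_height j
    have h₃ : m * (i : ℕ) ≤ m * j := Nat.mul_le_mul_left _ hij'.le
    omega
  have hout : ∀ i s (j : Fin n), (j : ℕ) = K i s + 1 → u.height j ≤ u.height i + s := by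
    intro i s j hj
    have hi := hle i s
    have hsub : F i ∪ (Finset.univ.filter
          fun x : Fin n × Fin m => (i : ℕ) ≤ x.1 ∧ (x.1 : ℕ) < j) ⊆
        F j ∪ Finset.univ.filter fun x : Fin n × Fin m => x.1 = i ∧ (x.2 : ℕ) < s := by
      rintro ⟨a, t⟩ hx
      simp only [F, Finset.mem_union, Finset.mem_filter, Finset.mem_univ, true_and] at hx ⊢
      rcases hx with hx | ⟨hia, haj⟩
      · omega
      · rcases eq_or_ne i a with rfl | hne
        · by_cases hts : (t : ℕ) < s
          · exact Or.inr ⟨rfl, hts⟩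
          · have : K i t ≤ K i s := hK.antitone i (by rw [Fin.le_def]; omega)
            rw [Fin.le_def] at this
            omega
        · have : K a t ≤ K i s := hK.nested i a s t (lt_of_le_of_ne hia hne)
            (by rw [Fin.le_def]; omega)
          rw [Fin.le_def] at this
          omega
    have hdisj : Disjoint (F i)
        (Finset.univ.filter fun x : Fin n × Fin m => (i : ℕ) ≤ x.1 ∧ (x.1 : ℕ) < j) := by
      rw [Finset.disjoint_left]
      rintro ⟨a, t⟩ hx hx'
      simp only [F, Finset.mem_filter, Finset.mem_univ, true_and] at hx hx'
      have := hle a t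
      omega
    have hcard := (Finset.card_le_card hsub).trans (Finset.card_union_le _ _)
    rw [Finset.card_union_of_disjoint hdisj, card_filter_snd i _ s.2.le,
      card_filter_fst _ _ j.2.le, ← hu, ← hu, Nat.mul_sub] at hcard
    have h₁ := u.add_height i
    have h₂ := u.add_height j
    have h₃ : m * (i : ℕ) ≤ m * j := Nat.mul_le_mul_left _ (by omega)
    omega
  refine ⟨u, funext fun i => funext fun s => le_antisymm ?_ ?_⟩
  · by_contra! hc
    have hc' : (K i s : ℕ) < u.bracket i s := hc
    have hi := hle i s
    have h₁ := u.le_bracket_iff.1 (le_refl (u.bracket i s)) ⟨K i s + 1, by omega⟩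
      (by rw [Fin.lt_def]; simp only; omega) (by rw [Fin.le_def]; exact hc')
    have h₂ := hout i s ⟨K i s + 1, by omega⟩ rfl
    omega
  · exact u.le_bracket_iff.2 fun j hij hj => hin i s j hij hj

end DyckM

lemma isBracketMatrix_update_id {n : ℕ} (i c : Fin n) (hc : i ≤ c) :
    IsBracketMatrix fun j (_ : Fin 1) => Function.update id i c j where
  le_apply j _ := by
    rcases eq_or_ne j i with rfl | hj
    · simpa using hc
    · simp [hj]
  antitone _ _ _ _ := le_rfl
  nested j k _ _ hjk hk := by
    rcases eq_or_ne j i with rfl | hj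
    · simpa [hjk.ne'] using hk
    · simp only [Function.update_of_ne hj, id] at hk
      exact absurd hjk hk.not_gt

/-- A cover relation of the Tamari lattice changes exactly one entry of the bracket vector. -/
lemma exists_bracket_lt_of_relCovBy {n : ℕ} {p q : DyckM 1 n} (h : RelCovBy (TamariLe 1 n) p q) :
    ∃ i, p.bracket i 0 < q.bracket i 0 ∧ ∀ j ≠ i, p.bracket j 0 = q.bracket j 0 := by
  obtain ⟨hle, hne, hcov⟩ := h
  simp only [DyckM.tamariLe_iff_bracket_le one_pos] at hle hcov
  obtain ⟨i, hi, hmin⟩ : ∃ i, p.bracket i 0 < q.bracket i 0 ∧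
      ∀ j < i, p.bracket j 0 = q.bracket j 0 := by
    have hex : ∃ i, p.bracket i 0 ≠ q.bracket i 0 := by
      by_contra! hc
      refine hne (DyckM.bracket_injective (funext fun i => funext fun s => ?_))
      rw [Subsingleton.elim s 0, hc]
    obtain ⟨i, hi, hmin⟩ := WellFounded.has_min (wellFounded_lt (α := Fin n))
      {i | p.bracket i 0 ≠ q.bracket i 0} hex
    exact ⟨i, lt_of_le_of_ne (hle i 0) hi, fun j hj => by_contra fun hc => hmin j hc hj⟩
  have hp := p.isBracketMatrix_bracket
  have hq := q.isBracketMatrix_bracket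
  have hK : IsBracketMatrix fun j (_ : Fin 1) =>
      if j = i then q.bracket j 0 else p.bracket j 0 := by
    refine ⟨fun j _ => ?_, fun _ _ _ _ => le_rfl, fun j k _ _ hjk hk => ?_⟩
    · split_ifs
      exacts [hq.le_apply j 0, hp.le_apply j 0]
    · split_ifs at hk ⊢ with hki hji hji
      · exact absurd (hji.trans hki.symm) hjk.ne
      · subst hki
        rw [hmin j hjk] at hk ⊢
        exact hq.nested j k 0 0 hjk hk
      · exact (hle k 0).trans (hq.nested j k 0 0 hjk hk)
      · exact hp.nested j k 0 0 hjk hk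
  obtain ⟨c, hc⟩ := DyckM.exists_bracket_eq hK
  have hc' : ∀ j s, c.bracket j s = if j = i then q.bracket j 0 else p.bracket j 0 :=
    fun j s => by rw [hc]
  rcases hcov c
    (fun j s => by
      rw [hc', Subsingleton.elim s 0]
      split_ifs
      exacts [hle j 0, le_rfl])
    (fun j s => by
      rw [hc', Subsingleton.elim s 0]
      split_ifs
      exacts [le_rfl, hle j 0]) with rfl | rfl
  · have := hc' i 0
    rw [if_pos rfl] at this
    exact absurd this hi.ne
  · exact ⟨i, hi, fun j hj => by rw [hc' j 0, if_neg hj]⟩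

namespace TamariMCover

variable {m n : ℕ}

/-- The bracket matrix whose columns are the bracket vectors of the components of an element of the
`m`-cover poset, in reverse order. -/
noncomputable def bracket (f : TamariMCover m n) (i : Fin n) (s : Fin m) : Fin n :=
  (f.1 s.rev).bracket i 0

lemma le_iff_bracket_le (f g : TamariMCover m n) :
    TamariMCoverLe m n f g ↔ f.bracket ≤ g.bracket := by
  simp only [TamariMCoverLe, DyckM.tamariLe_iff_bracket_le one_pos]
  constructor
  · exact fun h i s => h s.rev i 0
  · intro h t i s
    have := h i t.rev
    simp only [bracket, Fin.rev_rev] at this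
    rwa [Subsingleton.elim s 0]

lemma _root_.DyckM.bracket_of_forall_tamariLe {z : DyckM 1 n} (hz : ∀ x, TamariLe 1 n z x)
    (i : Fin n) : z.bracket i 0 = i := by
  obtain ⟨x, hx⟩ := DyckM.exists_bracket_eq (isBracketMatrix_update_id i i le_rfl)
  refine le_antisymm ?_ (z.isBracketMatrix_bracket.le_apply i 0)
  refine ((DyckM.tamariLe_iff_bracket_le one_pos z x).1 (hz x) i 0).trans_eq ?_
  simp [hx]

lemma isBracketMatrix_bracket (f : TamariMCover m n) : IsBracketMatrix f.bracket := by
  obtain ⟨f, z, l₀, l₁, l₂, p, q, hz, hl, hpq, hf⟩ := f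
  obtain ⟨i, hi, hne⟩ := exists_bracket_lt_of_relCovBy hpq
  have hp := p.isBracketMatrix_bracket
  have hq := q.isBracketMatrix_bracket
  have hle : ∀ j, p.bracket j 0 ≤ q.bracket j 0 := fun j =>
    (DyckM.tamariLe_iff_bracket_le one_pos p q).1 hpq.1 j 0
  have hz' := fun j => DyckM.bracket_of_forall_tamariLe hz j
  have hb : ∀ j s, TamariMCover.bracket ⟨f, z, l₀, l₁, l₂, p, q, hz, hl, hpq, hf⟩ j s =
      if (s.rev : ℕ) < l₀ then j else
        if (s.rev : ℕ) < l₀ + l₁ then p.bracket j 0 else q.bracket j 0 := by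
    intro j s
    simp only [bracket, hf]
    split_ifs
    exacts [hz' j, rfl, rfl]
  have hbq : ∀ j s, TamariMCover.bracket ⟨f, z, l₀, l₁, l₂, p, q, hz, hl, hpq, hf⟩ j s ≤
      q.bracket j 0 := by
    intro j s
    rw [hb]
    split_ifs
    exacts [hq.le_apply j 0, hle j, le_rfl]
  refine ⟨fun j s => ?_, fun j s t hst => ?_, fun j k s t hjk hk => ?_⟩
  · rw [hb]
    split_ifs
    exacts [le_rfl, hp.le_apply j 0, hq.le_apply j 0]
  · have hst' : (t.rev : ℕ) ≤ s.rev := Fin.rev_le_rev.2 hst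
    rw [hb, hb]
    split_ifs <;>
      first
      | omega
      | exact le_rfl
      | exact hle j
      | exact hp.le_apply j 0
      | exact hq.le_apply j 0
  · refine (hbq k t).trans ?_
    rw [hb] at hk ⊢
    split_ifs at hk ⊢
    · exact absurd hjk hk.not_gt
    · rcases eq_or_ne j i with rfl | hj
      · rw [← hne k hjk.ne']
        exact hp.nested j k 0 0 hjk hk
      · rw [hne j hj] at hk ⊢
        exact hq.nested j k 0 0 hjk hk
    · exact hq.nested j k 0 0 hjk hk

/-- Two bracket vectors that differ in one entry, with no bracket vector strictly between them,
give elements of the `m`-cover poset. -/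
lemma exists_bracket_eq {p q : Fin n → Fin n} (hp : IsBracketMatrix fun j (_ : Fin 1) => p j)
    (hq : IsBracketMatrix fun j (_ : Fin 1) => q j) (i : Fin n) (hi : p i < q i)
    (hne : ∀ j ≠ i, p j = q j)
    (hcov : ∀ r : Fin n → Fin n, IsBracketMatrix (fun j (_ : Fin 1) => r j) →
      (∀ j ≠ i, r j = q j) → p i ≤ r i → r i ≤ q i → r i = p i ∨ r i = q i)
    {l₀ l₁ l₂ : ℕ} (hl : l₀ + l₁ + l₂ = m) :
    ∃ f : TamariMCover m n, ∀ j s, f.bracket j s =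
      if (s : ℕ) < l₂ then q j else if (s : ℕ) < l₁ + l₂ then p j else j := by
  obtain ⟨p', hp'⟩ := DyckM.exists_bracket_eq hp
  obtain ⟨q', hq'⟩ := DyckM.exists_bracket_eq hq
  obtain ⟨z, hz⟩ := DyckM.exists_bracket_eq (isBracketMatrix_update_id i i le_rfl)
  have hz' : ∀ j s, z.bracket j s = j := fun j s => by simp [hz, Function.update_apply, eq_comm]
  have hcov' : RelCovBy (TamariLe 1 n) p' q' := by
    simp only [RelCovBy, DyckM.tamariLe_iff_bracket_le one_pos]
    refine ⟨?_, ?_, ?_⟩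
    · rw [hp', hq']
      intro j _
      rcases eq_or_ne j i with rfl | hj
      exacts [hi.le, (hne j hj).le]
    · rintro rfl
      exact hi.ne (congrFun (congrFun (hp'.symm.trans hq') i) 0)
    · intro c hpc hcq
      rw [hp'] at hpc
      rw [hq'] at hcq
      have hrest : ∀ j ≠ i, c.bracket j 0 = q j := fun j hj =>
        le_antisymm (hcq j 0) ((hne j hj).ge.trans (hpc j 0))
      have hc : IsBracketMatrix fun j (_ : Fin 1) => c.bracket j 0 := by
        convert c.isBracketMatrix_bracket using 3 with j s
        rw [Subsingleton.elim s 0]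
      refine (hcov _ hc hrest (hpc i 0) (hcq i 0)).imp (fun h => ?_) (fun h => ?_) <;>
        refine DyckM.bracket_injective (funext fun j => funext fun s => ?_) <;>
        rw [Subsingleton.elim s 0] <;>
        rcases eq_or_ne j i with rfl | hj
      · rw [h, hp']
      · rw [hrest j hj, hp', ← hne j hj]
      · rw [h, hq']
      · rw [hrest j hj, hq']
  refine ⟨⟨fun t => if (t : ℕ) < l₀ then z else if (t : ℕ) < l₀ + l₁ then p' else q',
    z, l₀, l₁, l₂, p', q', fun x => ?_, hl, hcov', fun _ => rfl⟩, fun j s => ?_⟩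
  · rw [DyckM.tamariLe_iff_bracket_le one_pos]
    intro j s
    rw [hz']
    exact x.isBracketMatrix_bracket.le_apply j s
  · have hs := Fin.val_rev s
    have hs' := s.2
    simp only [bracket]
    split_ifs <;> first | omega | simp only [hz', hp', hq']

lemma exists_bracket_le_not_le {K L : Fin n → Fin m → Fin n} (hK : IsBracketMatrix K)
    (hL : IsBracketMatrix L) (h : ¬ K ≤ L) :
    ∃ f : TamariMCover m n, f.bracket ≤ K ∧ ¬ f.bracket ≤ L := by
  simp only [Pi.le_def, not_forall, not_le] at h
  obtain ⟨i, s, hs⟩ := h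
  have hiK : i < K i s := (hL.le_apply i s).trans_lt hs
  have hiK' : (i : ℕ) < K i s := hiK
  have hs' := s.2
  let c : Fin n := ⟨K i s - 1, by omega⟩
  have hcv : (c : ℕ) = K i s - 1 := rfl
  have hic : i ≤ c := by rw [Fin.le_def]; omega
  have hc : c < K i s := by rw [Fin.lt_def]; omega
  obtain ⟨f, hf⟩ := exists_bracket_eq (isBracketMatrix_update_id i c hic)
    (isBracketMatrix_update_id i (K i s) hiK.le) i (by simpa using hc)
    (fun j hj => by simp [hj])
    (fun r _ _ h₁ h₂ => by
      simp only [Function.update_self, Fin.le_def, Fin.ext_iff] at h₁ h₂ ⊢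
      omega)
    (show (m - (s + 1)) + 0 + (s + 1) = m by omega)
  refine ⟨f, fun j t => ?_, fun hle => ?_⟩
  · rw [hf]
    have hj := hK.le_apply j t
    rcases eq_or_ne j i with rfl | hji
    · split_ifs with h₁ h₂
      · simpa using hK.antitone j (show t ≤ s by rw [Fin.le_def]; omega)
      · omega
      · exact hj
    · simpa [hji] using hj
  · have := hle i s
    rw [hf, if_pos (Nat.lt_succ_self _), Function.update_self] at this
    exact absurd hs this.not_gt

lemma exists_le_bracket_not_le {K L : Fin n → Fin m → Fin n} (hL : IsBracketMatrix L)
    (h : ¬ K ≤ L) : ∃ f : TamariMCover m n, L ≤ f.bracket ∧ ¬ K ≤ f.bracket := by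
  simp only [Pi.le_def, not_forall, not_le] at h
  obtain ⟨i, s, hs⟩ := h
  obtain ⟨c, hc⟩ : ∃ c, c = L i s := ⟨_, rfl⟩
  rw [← hc] at hs
  have hic : i ≤ c := hc ▸ hL.le_apply i s
  have hcn : (c : ℕ) < K i s := hs
  let top : Fin n := ⟨n - 1, by omega⟩
  have htop : ∀ x : Fin n, x ≤ top := fun x => by
    rw [Fin.le_def]
    exact Nat.le_sub_one_of_lt x.2
  have hs' := s.2
  have hclosed : ∀ a : ℕ, IsBracketMatrix fun j (_ : Fin 1) =>
      if a ≤ (j : ℕ) ∧ j ≤ c then c else top := by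
    refine fun a => ⟨fun j _ => ?_, fun _ _ _ _ => le_rfl, fun j k _ _ hjk hk => ?_⟩
    · split_ifs with hj
      exacts [hj.2, htop j]
    · have hjk' : (j : ℕ) < k := hjk
      by_cases hj : a ≤ (j : ℕ) ∧ j ≤ c
      · rw [if_pos hj] at hk ⊢
        rw [if_pos ⟨by omega, hk⟩]
      · rw [if_neg hj]
        exact htop _
  have hpi : (if (i : ℕ) ≤ i ∧ i ≤ c then c else top) = c := if_pos ⟨le_rfl, hic⟩
  have hqi : (if (i : ℕ) + 1 ≤ i ∧ i ≤ c then c else top) = top := if_neg (by omega)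
  obtain ⟨f, hf⟩ := exists_bracket_eq (m := m) (hclosed i) (hclosed (i + 1)) i
    (by
      rw [hpi, hqi, Fin.lt_def]
      exact (hcn.trans_le (htop (K i s))))
    (fun j hj => by
      have hj' : (j : ℕ) ≠ i := fun h => hj (Fin.ext h)
      have hiff : (i : ℕ) ≤ j ∧ j ≤ c ↔ (i : ℕ) + 1 ≤ j ∧ j ≤ c :=
        and_congr_left fun _ => ⟨fun h => by omega, fun h => by omega⟩
      simp only [hiff])
    (fun r hr hrest h₁ _ => by
      rw [hpi] at h₁ ⊢
      rw [hqi]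
      rcases h₁.eq_or_lt with h₁ | h₁
      · exact Or.inl h₁.symm
      · refine Or.inr (le_antisymm (htop _) ?_)
        have hic' : (i : ℕ) ≤ c := hic
        have hid : i < (⟨(c : ℕ) + 1, by omega⟩ : Fin n) := by rw [Fin.lt_def]; simp only; omega
        have h₂ := hr.nested i ⟨(c : ℕ) + 1, by omega⟩ 0 0 hid (by rw [Fin.le_def]; exact h₁)
        rw [hrest _ hid.ne'] at h₂
        exact (if_neg fun h => absurd (Fin.le_def.1 h.2) (Nat.not_succ_le_self c)).symm.trans_le h₂)
    (show 0 + (m - s) + (s : ℕ) = m by omega)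
  refine ⟨f, fun j t => ?_, fun hle => ?_⟩
  · rw [hf]
    have ht := t.2
    have hinside : i < j → j ≤ c → L j t ≤ c := fun h₁ h₂ => by
      rw [hc] at h₂ ⊢
      exact hL.nested i j s t h₁ h₂
    split_ifs with h₁ h₂ h₂ h₃
    · exact hinside h₂.1 h₂.2
    · exact htop _
    · rcases eq_or_ne i j with rfl | hij
      · rw [hc]
        exact hL.antitone i (by rw [Fin.le_def]; omega)
      · exact hinside (lt_of_le_of_ne h₃.1 hij) h₃.2
    · exact htop _
    · omega
  · have := hle i s
    rw [hf, if_neg (lt_irrefl _), if_pos (by omega), hpi] at this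
    exact absurd hs this.not_gt

end TamariMCover

/-- The elements of the `m`-cover poset below an `m`-Dyck path, compared through bracket matrices,
form a cut. -/
lemma DyckM.lowerBounds_upperBounds_setOf_bracket_le {m n : ℕ} (x : DyckM m n) :
    relLowerBounds (TamariMCoverLe m n) (relUpperBounds (TamariMCoverLe m n)
      {f | f.bracket ≤ x.bracket}) = {f | f.bracket ≤ x.bracket} := by
  refine Set.Subset.antisymm (fun f hf => ?_) (fun f hf g hg => hg f hf)
  by_contra hfx
  obtain ⟨g, hxg, hfg⟩ := TamariMCover.exists_le_bracket_not_le x.isBracketMatrix_bracket hfx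
  refine hfg ((TamariMCover.le_iff_bracket_le f g).1 (hf g fun a ha => ?_))
  rw [TamariMCover.le_iff_bracket_le]
  exact le_trans ha hxg

lemma isBracketMatrix_iInf {m n : ℕ} [NeZero n] {ι : Type*} {K : ι → Fin n → Fin m → Fin n}
    (hK : ∀ b, IsBracketMatrix (K b)) : IsBracketMatrix fun i s => ⨅ b, K b i s where
  le_apply i s := le_iInf fun b => (hK b).le_apply i s
  antitone i _ _ hst := iInf_mono fun b => (hK b).antitone i hst
  nested i j s t hij hj := le_iInf fun b =>
    (iInf_le _ b).trans ((hK b).nested i j s t hij (hj.trans (iInf_le _ b)))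

/-- The m-Tamari lattice `T_n^(m)` is order-isomorphic to the Dedekind–MacNeille
completion of the m-cover poset `T_n^⟨m⟩` of the Tamari lattice `T_n`. -/
theorem stmt_4 (m n : ℕ) (hm : 0 < m) (hn : 0 < n) :
    ∃ e : DyckM m n ≃ DMCut (TamariMCoverLe m n),
      ∀ x y : DyckM m n, TamariLe m n x y ↔ (e x).1 ⊆ (e y).1 := by
  have : NeZero n := ⟨hn.ne'⟩
  let φ : DyckM m n → DMCut (TamariMCoverLe m n) := fun x =>
    ⟨{f | f.bracket ≤ x.bracket}, x.lowerBounds_upperBounds_setOf_bracket_le⟩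
  have hφ : ∀ x y, (φ x).1 ⊆ (φ y).1 ↔ x.bracket ≤ y.bracket := by
    refine fun x y => ⟨fun h => ?_, fun h f hf => le_trans hf h⟩
    by_contra hxy
    obtain ⟨f, hfx, hfy⟩ := TamariMCover.exists_bracket_le_not_le x.isBracketMatrix_bracket
      y.isBracketMatrix_bracket hxy
    exact hfy (h hfx)
  have hinj : Function.Injective φ := fun x y hxy => DyckM.bracket_injective <|
    le_antisymm ((hφ x y).1 (hxy ▸ subset_rfl)) ((hφ y x).1 (hxy ▸ subset_rfl))
  have hsurj : Function.Surjective φ := by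
    rintro ⟨A, hA⟩
    obtain ⟨x, hx⟩ := DyckM.exists_bracket_eq (isBracketMatrix_iInf
      fun b : relUpperBounds (TamariMCoverLe m n) A => b.1.isBracketMatrix_bracket)
    refine ⟨x, Subtype.ext ?_⟩
    change {f : TamariMCover m n | f.bracket ≤ x.bracket} = A
    rw [hx]
    refine Eq.trans ?_ hA
    refine Set.ext fun f => ⟨fun hf b hb => ?_, fun hf i s => ?_⟩
    · rw [TamariMCover.le_iff_bracket_le]
      exact fun i s => (hf i s).trans
        (iInf_le (fun b : relUpperBounds (TamariMCoverLe m n) A => b.1.bracket i s) ⟨b, hb⟩)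
    · exact le_iInf fun b => (TamariMCover.le_iff_bracket_le f b.1).1 (hf b.1 b.2) i s
  refine ⟨Equiv.ofBijective φ ⟨hinj, hsurj⟩, fun x y => ?_⟩
  rw [DyckM.tamariLe_iff_bracket_le hm]
  exact (hφ x y).symm
end

section
/- Let k, l, m > 0 be integers. In the m-cover poset P_{k,l}^⟨m⟩ of the poset P_{k,l}, for every j ≥ 0 the number of elements having exactly j upper covers equals the coefficient of t^j in the polynomial 1 + (k+l)m·t + (k+l)·C(m,2)·t² + m·t^{l+1}, and the number of elements having exactly j lower covers equals the coefficient of t^j in the same polynomial (here C(m,2) is the binomial coefficient m choose 2). -/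
/-- An `l`-element antichain: `Fin l` with the discrete order. -/
def Anti (l : ℕ) : Type := Fin l

instance (l : ℕ) : PartialOrder (Anti l) where
  le a b := a = b
  le_refl _ := rfl
  le_trans a b c h h' := (show a = b from h).trans (show b = c from h')
  le_antisymm _ _ h _ := h

/-- The bounded poset `P_{k,l}` whose proper part is the disjoint union of a `k`-chain
and an `l`-antichain. -/
abbrev PKL (k l : ℕ) : Type := WithBot (WithTop (Fin k ⊕ Anti l))

/-- The elements `c₀ = ⊥ < c₁ < ⋯ < c_k < c_{k+1} = ⊤` of `P_{k,l}`. -/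
def cElt (k l : ℕ) (i : ℕ) : PKL k l :=
  if h0 : i = 0 then ⊥
  else if h : i ≤ k then
    (((Sum.inl ⟨i - 1, by omega⟩ : Fin k ⊕ Anti l) : WithTop (Fin k ⊕ Anti l)) : PKL k l)
  else (⊤ : PKL k l)

namespace PKL

variable {k l : ℕ}

/-- The inclusion of the proper part into `P_{k,l}`. -/
def proper (q : Fin k ⊕ Anti l) : PKL k l := ((q : WithTop (Fin k ⊕ Anti l)) : PKL k l)

/-- The unique upper cover of an element of the proper part. -/
def up : Fin k ⊕ Anti l → PKL k l
  | .inl i => if h : (i : ℕ) + 1 < k then proper (.inl ⟨i + 1, h⟩) else ⊤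
  | .inr _ => ⊤

/-- The unique lower cover of an element of the proper part. -/
def down : Fin k ⊕ Anti l → PKL k l
  | .inl i => if 0 < (i : ℕ) then proper (.inl ⟨i - 1, by omega⟩) else ⊥
  | .inr _ => ⊥

/-- The coatoms of `P_{k,l}`. -/
def coatom (hk : 0 < k) : Option (Fin l) → Fin k ⊕ Anti l
  | none => .inl ⟨k - 1, by omega⟩
  | some a => .inr a

/-- The atoms of `P_{k,l}`. -/
def atom (hk : 0 < k) : Option (Fin l) → Fin k ⊕ Anti l
  | none => .inl ⟨0, hk⟩
  | some a => .inr a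

theorem eq_bot_or_eq_top_or_proper (x : PKL k l) : x = ⊥ ∨ x = ⊤ ∨ ∃ q, x = proper q := by
  induction x using WithBot.recBotCoe with
  | bot => exact .inl rfl
  | coe x =>
    induction x using WithTop.recTopCoe with
    | top => exact .inr (.inl rfl)
    | coe q => exact .inr (.inr ⟨q, rfl⟩)

theorem proper_le_proper {p q : Fin k ⊕ Anti l} : proper p ≤ proper q ↔ p ≤ q := by
  simp [proper]

theorem proper_lt_proper {p q : Fin k ⊕ Anti l} : proper p < proper q ↔ p < q := by
  simp [proper]

theorem bot_lt_proper (q : Fin k ⊕ Anti l) : ⊥ < proper q := WithBot.bot_lt_coe _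

theorem proper_lt_top (q : Fin k ⊕ Anti l) : proper q < ⊤ :=
  WithBot.coe_lt_coe.2 (WithTop.coe_lt_top q)

theorem anti_lt (a b : Anti l) : ¬ a < b := fun h => h.ne h.le

theorem proper_lt_iff {p : Fin k ⊕ Anti l} {y : PKL k l} : proper p < y ↔ up p ≤ y := by
  rcases eq_bot_or_eq_top_or_proper y with rfl | rfl | ⟨q, rfl⟩
  · have : up p ≠ ⊥ := by
      rcases p with i | a
      · simp only [up]; split_ifs
        · exact (bot_lt_proper _).ne'
        · exact bot_lt_top.ne'
      · exact bot_lt_top.ne'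
    simp [this]
  · simp [proper_lt_top]
  · rw [proper_lt_proper]
    rcases p with i | a <;> rcases q with j | b
    · simp only [up]; split_ifs with h
      · rw [proper_le_proper]
        simp only [Sum.inl_lt_inl_iff, Sum.inl_le_inl_iff, Fin.lt_def, Fin.le_def]
        omega
      · simp only [top_le_iff, (proper_lt_top _).ne, Sum.inl_lt_inl_iff, Fin.lt_def, iff_false]
        omega
    · simp only [up]; split_ifs with h
      · rw [proper_le_proper]; simp
      · simp [(proper_lt_top _).ne]
    · simp [up, (proper_lt_top _).ne]
    · simp [up, (proper_lt_top _).ne, anti_lt]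

theorem lt_proper_iff {p : Fin k ⊕ Anti l} {y : PKL k l} : y < proper p ↔ y ≤ down p := by
  rcases eq_bot_or_eq_top_or_proper y with rfl | rfl | ⟨q, rfl⟩
  · simp [bot_lt_proper]
  · have : down p ≠ ⊤ := by
      rcases p with i | a
      · simp only [down]; split_ifs
        · exact (proper_lt_top _).ne
        · exact bot_lt_top.ne
      · exact bot_lt_top.ne
    simp [this]
  · rw [proper_lt_proper]
    rcases p with i | a <;> rcases q with j | b
    · simp only [down]; split_ifs with h
      · rw [proper_le_proper]
        simp only [Sum.inl_lt_inl_iff, Sum.inl_le_inl_iff, Fin.lt_def, Fin.le_def]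
        omega
      · simp only [le_bot_iff, (bot_lt_proper _).ne', Sum.inl_lt_inl_iff, Fin.lt_def, iff_false]
        omega
    · simp only [down]; split_ifs with h
      · rw [proper_le_proper]; simp
      · simp [(bot_lt_proper _).ne']
    · simp [down, (bot_lt_proper _).ne']
    · simp [down, (bot_lt_proper _).ne', anti_lt]

theorem proper_lt_up (p : Fin k ⊕ Anti l) : proper p < up p := proper_lt_iff.2 le_rfl

theorem down_lt_proper (p : Fin k ⊕ Anti l) : down p < proper p := lt_proper_iff.2 le_rfl

theorem proper_covBy_iff {p : Fin k ⊕ Anti l} {y : PKL k l} : proper p ⋖ y ↔ y = up p := by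
  constructor
  · intro h
    rcases (proper_lt_iff.1 h.lt).eq_or_lt with h' | h'
    · exact h'.symm
    · exact absurd h' (h.2 (proper_lt_up p))
  · rintro rfl
    exact ⟨proper_lt_up p, fun _ h h' => (proper_lt_iff.1 h).not_gt h'⟩

theorem covBy_proper_iff {p : Fin k ⊕ Anti l} {y : PKL k l} : y ⋖ proper p ↔ y = down p := by
  constructor
  · intro h
    rcases (lt_proper_iff.1 h.lt).eq_or_lt with h' | h'
    · exact h'
    · exact absurd (down_lt_proper p) (h.2 h')
  · rintro rfl
    exact ⟨down_lt_proper p, fun _ h h' => (lt_proper_iff.1 h').not_gt h⟩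

theorem up_coatom (hk : 0 < k) (o : Option (Fin l)) : up (coatom hk o) = ⊤ := by
  cases o
  · simp only [coatom, up]; rw [dif_neg]; omega
  · rfl

theorem coatom_covBy_top (hk : 0 < k) (o : Option (Fin l)) : proper (coatom hk o) ⋖ ⊤ :=
  proper_covBy_iff.2 (up_coatom hk o).symm

theorem exists_le_coatom (hk : 0 < k) {y : PKL k l} (hy : y < ⊤) :
    ∃ o, y ≤ proper (coatom hk o) := by
  rcases eq_bot_or_eq_top_or_proper y with rfl | rfl | ⟨q, rfl⟩
  · exact ⟨none, bot_le⟩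
  · exact absurd hy (lt_irrefl _)
  · rcases q with i | a
    · refine ⟨none, ?_⟩
      rw [proper_le_proper]; simp only [coatom, Sum.inl_le_inl_iff, Fin.le_def]; omega
    · exact ⟨some a, le_rfl⟩

theorem exists_atom_le (hk : 0 < k) {y : PKL k l} (hy : ⊥ < y) :
    ∃ o, proper (atom hk o) ≤ y := by
  rcases eq_bot_or_eq_top_or_proper y with rfl | rfl | ⟨q, rfl⟩
  · exact absurd hy (lt_irrefl _)
  · exact ⟨none, le_top⟩
  · rcases q with i | a
    · refine ⟨none, ?_⟩
      rw [proper_le_proper]; simp [atom, Fin.le_def]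
    · exact ⟨some a, le_rfl⟩

theorem eq_of_coatom_le (hk : 0 < k) {o o' : Option (Fin l)}
    (h : proper (coatom hk o) ≤ proper (coatom hk o')) : o = o' := by
  rw [proper_le_proper] at h
  cases o <;> cases o' <;> simp [coatom] at h ⊢
  · exact Sum.not_inl_le_inr h
  · exact Sum.not_inr_le_inl h
  · exact Sum.inr_le_inr_iff.1 h

theorem eq_of_atom_le (hk : 0 < k) {o o' : Option (Fin l)}
    (h : proper (atom hk o) ≤ proper (atom hk o')) : o = o' := by
  rw [proper_le_proper] at h
  cases o <;> cases o' <;> simp [atom] at h ⊢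
  · exact Sum.not_inl_le_inr h
  · exact Sum.not_inr_le_inl h
  · exact Sum.inr_le_inr_iff.1 h

end PKL

section Covers

variable {β ι : Type*} [PartialOrder β]

/-- A family of pairwise incomparable elements that generates the elements strictly above `x`
enumerates the upper covers of `x`. -/
theorem card_upperCovers_eq {x : β} (s : ι → β) (hs : ∀ i j, s i ≤ s j → i = j)
    (hlt : ∀ i, x < s i) (hex : ∀ y, x < y → ∃ i, s i ≤ y) :
    Nat.card {y : β // x ⋖ y} = Nat.card ι := by
  have hcov : ∀ i, x ⋖ s i := fun i => ⟨hlt i, fun z hz hz' => by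
    obtain ⟨j, hj⟩ := hex z hz
    obtain rfl := hs j i (hj.trans hz'.le)
    exact (hj.trans_lt hz').false⟩
  refine (Nat.card_congr (Equiv.ofBijective (fun i => ⟨s i, hcov i⟩) ⟨?_, ?_⟩)).symm
  · intro i j h
    exact hs i j (congrArg Subtype.val h).le
  · rintro ⟨y, hy⟩
    obtain ⟨i, hi⟩ := hex y hy.lt
    exact ⟨i, Subtype.ext (hi.eq_or_lt.resolve_right (hy.2 (hlt i)))⟩

/-- A family of pairwise incomparable elements that generates the elements strictly below `x`
enumerates the lower covers of `x`. -/
theorem card_lowerCovers_eq {x : β} (s : ι → β) (hs : ∀ i j, s i ≤ s j → i = j)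
    (hlt : ∀ i, s i < x) (hex : ∀ y, y < x → ∃ i, y ≤ s i) :
    Nat.card {y : β // y ⋖ x} = Nat.card ι := by
  rw [← card_upperCovers_eq (β := βᵒᵈ) (x := OrderDual.toDual x) (fun i => OrderDual.toDual (s i))
    (fun i j h => (hs j i h).symm) hlt hex]
  exact Nat.card_congr (OrderDual.toDual.subtypeEquiv fun y => toDual_covBy_toDual_iff.symm)

end Covers

namespace MCover

variable {α : Type*} [PartialOrder α] [OrderBot α] {m : ℕ}

theorem bot_or_eq_or_covBy (y : MCover α m) {i j : Fin m} (hij : i ≤ j) :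
    y.1 i = ⊥ ∨ y.1 i = y.1 j ∨ y.1 i ⋖ y.1 j := by
  obtain ⟨f, l₀, l₁, l₂, p₁, p₂, -, hp, hf⟩ := y
  rw [Fin.le_def] at hij
  simp only [hf]
  split_ifs <;> first | omega | simp [hp]

theorem mono (y : MCover α m) {i j : Fin m} (hij : i ≤ j) : y.1 i ≤ y.1 j := by
  rcases y.bot_or_eq_or_covBy hij with h | h | h
  · simp [h]
  · exact h.le
  · exact h.le

/-- The element of the `m`-cover poset with values `⊥` before `a`, `u` from `a` up to `b`,
and `v` from `b` on. -/
def mk {a b : ℕ} {u v : α} (hab : a ≤ b) (hb : b ≤ m) (huv : u ⋖ v) : MCover α m :=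
  ⟨fun i => if (i : ℕ) < a then ⊥ else if (i : ℕ) < b then u else v,
    a, b - a, m - b, u, v, by omega, huv, fun i => by rw [Nat.add_sub_cancel' hab]⟩

theorem mk_apply {a b : ℕ} {u v : α} (hab : a ≤ b) (hb : b ≤ m) (huv : u ⋖ v) (i : Fin m) :
    (mk hab hb huv).1 i = if (i : ℕ) < a then ⊥ else if (i : ℕ) < b then u else v := rfl

theorem lt_of_le_of_apply_ne {x y : MCover α m} (h : x ≤ y) (i : Fin m) (hi : x.1 i ≠ y.1 i) :
    x < y :=
  h.lt_of_ne fun e => hi (by rw [e])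

end MCover

namespace MCover

open PKL

variable {k l m : ℕ}

/-- The tuple with values `⊥` before `a`, `p` from `a` up to `b`, and the upper cover of `p`
from `b` on. -/
def step_s11 (p : Fin k ⊕ Anti l) {a b : ℕ} (hab : a ≤ b) (hb : b ≤ m) : MCover (PKL k l) m :=
  mk hab hb (proper_covBy_iff.2 rfl : proper p ⋖ up p)

/-- The tuple with values `⊥` before `a` and `⊤` from `a` on. -/
def topStep (hk : 0 < k) {a : ℕ} (ha : a ≤ m) : MCover (PKL k l) m :=
  mk le_rfl ha (coatom_covBy_top hk none)

theorem step_apply (p : Fin k ⊕ Anti l) {a b : ℕ} (hab : a ≤ b) (hb : b ≤ m) (i : Fin m) :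
    (step_s11 p hab hb).1 i = if (i : ℕ) < a then ⊥ else if (i : ℕ) < b then proper p else up p := rfl

theorem topStep_apply (hk : 0 < k) {a : ℕ} (ha : a ≤ m) (i : Fin m) :
    (topStep hk ha : MCover (PKL k l) m).1 i = if (i : ℕ) < a then ⊥ else ⊤ := by
  rw [topStep, mk_apply]; split_ifs <;> rfl

variable {p : Fin k ⊕ Anti l} {a b : ℕ} {y : MCover (PKL k l) m}

theorem proper_le_of_step_le {hab : a ≤ b} {hb : b ≤ m} (hy : step_s11 p hab hb ≤ y) {i : Fin m}
    (ha : a ≤ i) : proper p ≤ y.1 i := by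
  have := hy i
  rw [step_apply, if_neg (by omega)] at this
  split_ifs at this
  · exact this
  · exact (proper_lt_up p).le.trans this

theorem up_le_of_step_le {hab : a ≤ b} {hb : b ≤ m} (hy : step_s11 p hab hb ≤ y) {i : Fin m}
    (hbi : b ≤ i) : up p ≤ y.1 i := by
  have := hy i
  rwa [step_apply, if_neg (by omega), if_neg (by omega)] at this

theorem apply_le_of_le_step {hab : a ≤ b} {hb : b ≤ m} (hy : y ≤ step_s11 p hab hb) {i : Fin m}
    (hib : i < b) : y.1 i ≤ proper p := by
  have := hy i
  rw [step_apply] at this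
  split_ifs at this
  · exact this.trans bot_le
  · exact this

theorem apply_eq_bot_of_le_step {hab : a ≤ b} {hb : b ≤ m} (hy : y ≤ step_s11 p hab hb) {i : Fin m}
    (hia : i < a) : y.1 i = ⊥ := by
  have := hy i
  rwa [step_apply, if_pos hia, le_bot_iff] at this

theorem apply_le_up_of_le_step {hab : a ≤ b} {hb : b ≤ m} (hy : y ≤ step_s11 p hab hb) (i : Fin m) :
    y.1 i ≤ up p := by
  refine (hy i).trans ?_
  rw [step_apply]
  split_ifs
  · exact bot_le
  · exact (proper_lt_up p).le
  · exact le_rfl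

theorem step_pred_le (hab : a < b) {hb : b ≤ m} (hy : step_s11 p hab.le hb ≤ y)
    (h : proper p < y.1 ⟨b - 1, by omega⟩) :
    step_s11 p (Nat.le_sub_one_of_lt hab) (b.sub_le 1 |>.trans hb) ≤ y := by
  intro i
  rw [step_apply]
  split_ifs with h₁ h₂
  · exact bot_le
  · exact proper_le_of_step_le hy (by omega)
  · exact (proper_lt_iff.1 h).trans (y.mono (Fin.le_def.2 (by simp only; omega)))

theorem apply_eq_step_of_le (hab : a < b) {hb : b ≤ m} (hy : step_s11 p hab.le hb ≤ y)
    (h : y.1 ⟨b - 1, by omega⟩ = proper p) {i : Fin m} (hai : a ≤ i) :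
    y.1 i = (step_s11 p hab.le hb).1 i := by
  rw [step_apply, if_neg (by omega)]
  split_ifs with h₂
  · refine le_antisymm ?_ (proper_le_of_step_le hy hai)
    exact (y.mono (Fin.le_def.2 (by simp only; omega))).trans h.le
  · have hle := up_le_of_step_le hy (i := i) (by omega)
    rcases y.bot_or_eq_or_covBy (i := ⟨b - 1, by omega⟩) (j := i)
      (Fin.le_def.2 (by simp only; omega)) with e | e | e
    · exact absurd (h.symm.trans e) (bot_lt_proper p).ne'
    · rw [← e, h] at hle
      exact absurd (proper_lt_up p) hle.not_gt
    · rw [h] at e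
      exact proper_covBy_iff.1 e

theorem exists_least_above_step (ha : 0 < a) (hab : a < b) (hb : b ≤ m) :
    ∃ u : MCover (PKL k l) m, step_s11 p hab.le hb ≤ u ∧ u.1 ⟨b - 1, by omega⟩ = proper p ∧
      u.1 ⟨a - 1, by omega⟩ ≠ ⊥ ∧ ∀ y, step_s11 p hab.le hb ≤ y → y.1 ⟨b - 1, by omega⟩ = proper p →
        y.1 ⟨a - 1, by omega⟩ ≠ ⊥ → u ≤ y := by
  by_cases hcase : b < m ∨ down p = ⊥
  · refine ⟨step_s11 p (a := a - 1) (b := b) (by omega) hb, ?_, ?_, ?_, ?_⟩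
    · intro i
      rw [step_apply, step_apply]
      split_ifs <;> first | omega | exact bot_le | exact le_rfl
    · rw [step_apply, if_neg (by simp only; omega), if_pos (by simp only; omega)]
    · rw [step_apply, if_neg (by simp only; omega), if_pos (by simp only; omega)]
      exact (bot_lt_proper p).ne'
    · intro y hy hyb hya
      have key : proper p ≤ y.1 ⟨a - 1, by omega⟩ := by
        have hle : y.1 ⟨a - 1, by omega⟩ ≤ proper p :=
          (y.mono (Fin.le_def.2 (by simp only; omega))).trans hyb.le
        by_contra hlt
        have hlt := hle.lt_of_not_ge hlt
        rcases hcase with hbm | hd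
        · have hu := apply_eq_step_of_le hab hy hyb (i := ⟨b, hbm⟩) hab.le
          rw [step_apply, if_neg (by simp only; omega), if_neg (by simp only; omega)] at hu
          rcases y.bot_or_eq_or_covBy (i := ⟨a - 1, by omega⟩) (j := ⟨b, hbm⟩)
            (Fin.le_def.2 (by simp only; omega)) with e | e | e
          · exact hya e
          · rw [e, hu] at hle
            exact hle.not_gt (proper_lt_up p)
          · rw [hu] at e
            exact e.2 hlt (proper_lt_up p)
        · rw [lt_proper_iff, hd, le_bot_iff] at hlt
          exact hya hlt
      intro i
      rw [step_apply]
      split_ifs with h₁ h₂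
      · exact bot_le
      · exact key.trans (y.mono (Fin.le_def.2 (by simp only; omega)))
      · exact up_le_of_step_le hy (by omega)
  · obtain ⟨hbm, hd⟩ := not_or.1 hcase
    obtain rfl : b = m := by omega
    refine ⟨mk (a := a - 1) (b := a) (by omega) (by omega) (covBy_proper_iff.2 rfl :
      down p ⋖ proper p), ?_, ?_, ?_, ?_⟩
    · intro i
      rw [step_apply, mk_apply]
      split_ifs <;> first | omega | exact bot_le | exact le_rfl
    · rw [mk_apply, if_neg (by simp only; omega), if_neg (by simp only; omega)]
    · rw [mk_apply, if_neg (by simp only; omega), if_pos (by simp only; omega)]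
      exact hd
    · intro y hy hyb hya i
      rw [mk_apply]
      split_ifs with h₁ h₂
      · exact bot_le
      · rw [show i = ⟨a - 1, by omega⟩ from Fin.ext (by simp only; omega)]
        rcases y.bot_or_eq_or_covBy (i := ⟨a - 1, by omega⟩) (j := ⟨b - 1, by omega⟩)
          (Fin.le_def.2 (by simp only; omega)) with e | e | e
        · exact absurd e hya
        · rw [e, hyb]; exact (down_lt_proper p).le
        · rw [hyb] at e; exact (covBy_proper_iff.1 e).ge
      · exact proper_le_of_step_le hy (by omega)

theorem step_lt_step_pred (hab : a < b) (hb : b ≤ m) :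
    step_s11 p hab.le hb < step_s11 p (Nat.le_sub_one_of_lt hab) (b.sub_le 1 |>.trans hb) := by
  refine lt_of_le_of_apply_ne (fun i => ?_) ⟨b - 1, by omega⟩ ?_
  · rw [step_apply, step_apply]
    split_ifs <;> first | omega | exact bot_le | exact le_rfl | exact (proper_lt_up p).le
  · rw [step_apply, step_apply, if_neg (by simp only; omega), if_pos (by simp only; omega),
      if_neg (by simp only; omega), if_neg (by simp only; omega)]
    exact (proper_lt_up p).ne

theorem card_upperCovers_step (p : Fin k ⊕ Anti l) (hab : a < b) (hb : b ≤ m) :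
    Nat.card {y // step_s11 p hab.le hb ⋖ y} = if a = 0 then 1 else 2 := by
  split_ifs with ha
  · subst ha
    rw [card_upperCovers_eq (ι := Unit)
      (fun _ => step_s11 p (Nat.le_sub_one_of_lt hab) (b.sub_le 1 |>.trans hb)) (fun _ _ _ => rfl)
      (fun _ => step_lt_step_pred hab hb), Nat.card_unique]
    refine fun y hy => ⟨(), step_pred_le hab hy.le ?_⟩
    refine (proper_le_of_step_le hy.le (Nat.zero_le _)).lt_of_ne fun e => hy.ne ?_
    exact Subtype.ext (funext fun i => (apply_eq_step_of_le hab hy.le e.symm (Nat.zero_le _)).symm)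
  · obtain ⟨u, hu, hub, hua, hmin⟩ :=
      exists_least_above_step (p := p) (Nat.pos_of_ne_zero ha) hab hb
    rw [card_upperCovers_eq (ι := Bool) (fun t => if t then u else
      step_s11 p (Nat.le_sub_one_of_lt hab) (b.sub_le 1 |>.trans hb)), Nat.card_eq_fintype_card,
      Fintype.card_bool]
    · rintro (_ | _) (_ | _) h
      · rfl
      · have := h ⟨b - 1, by omega⟩
        simp only [if_true, hub, step_apply, Bool.false_eq_true, if_false] at this
        rw [if_neg (by omega), if_neg (by omega)] at this
        exact absurd (proper_lt_up p) this.not_gt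
      · have := h ⟨a - 1, by omega⟩
        simp only [if_true, step_apply, Bool.false_eq_true, if_false] at this
        rw [if_pos (by omega), le_bot_iff] at this
        exact absurd this hua
      · rfl
    · rintro (_ | _)
      · exact step_lt_step_pred hab hb
      · refine lt_of_le_of_apply_ne hu ⟨a - 1, by omega⟩ ?_
        rw [step_apply, if_pos (by simp only; omega)]
        exact hua.symm
    · intro y hy
      by_cases e : y.1 ⟨b - 1, by omega⟩ = proper p
      · refine ⟨true, hmin y hy.le e fun e' => hy.ne (Subtype.ext (funext fun i => ?_))⟩
        by_cases hi : a ≤ i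
        · exact (apply_eq_step_of_le hab hy.le e hi).symm
        · rw [step_apply, if_pos (by omega), eq_comm, ← le_bot_iff, ← e']
          exact y.mono (Fin.le_def.2 (by simp only; omega))
      · refine ⟨false, step_pred_le hab hy.le ?_⟩
        exact (proper_le_of_step_le hy.le (by simp only; omega)).lt_of_ne (Ne.symm e)

theorem card_lowerCovers_step (p : Fin k ⊕ Anti l) (hab : a < b) (hb : b ≤ m) :
    Nat.card {y // y ⋖ step_s11 p hab.le hb} = if b = m then 1 else 2 := by
  split_ifs with hbm
  · subst hbm
    rw [card_lowerCovers_eq (ι := Unit) (fun _ => mk (a := a) (b := a + 1) (by omega) (by omega)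
      (covBy_proper_iff.2 rfl : down p ⋖ proper p)) (fun _ _ _ => rfl), Nat.card_unique]
    · refine fun _ => lt_of_le_of_apply_ne (fun i => ?_) ⟨a, hab⟩ ?_
      · rw [step_apply, mk_apply]
        split_ifs <;> first | omega | exact bot_le | exact le_rfl | exact (down_lt_proper p).le
      · simp [step_apply, mk_apply, hab, (down_lt_proper p).ne]
    · refine fun y hy => ⟨(), fun i => ?_⟩
      rw [mk_apply]
      split_ifs with h₁ h₂
      · exact (apply_eq_bot_of_le_step hy.le h₁).le
      · obtain rfl : i = ⟨a, hab⟩ := Fin.ext (by simp only; omega)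
        rw [← lt_proper_iff]
        refine (apply_le_of_le_step hy.le hab).lt_of_ne fun e => hy.not_ge fun i => ?_
        rw [step_apply]
        split_ifs with h₁ h₂
        · exact bot_le
        · exact e.ge.trans (y.mono (Fin.le_def.2 (by simp only; omega)))
        · omega
      · exact apply_le_of_le_step hy.le i.2
  · have hlt : b < m := by omega
    rw [card_lowerCovers_eq (ι := Bool) (fun t => if t then step_s11 p (a := a + 1) (b := b) hab hb else
      step_s11 p (a := a) (b := b + 1) (by omega) hlt), Nat.card_eq_fintype_card, Fintype.card_bool]
    · rintro (_ | _) (_ | _) h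
      · rfl
      · have := h ⟨a, by omega⟩
        simp [step_apply, hab.le, (bot_lt_proper _).ne'] at this
      · have := h ⟨b, by omega⟩
        simp only [if_true, step_apply, Bool.false_eq_true, if_false] at this
        rw [if_neg (by omega), if_neg (by omega), if_neg (by omega), if_pos (by omega)] at this
        exact absurd (proper_lt_up p) this.not_gt
      · rfl
    · rintro (_ | _)
      · refine lt_of_le_of_apply_ne (fun i => ?_) ⟨b, by omega⟩ ?_
        · simp only [Bool.false_eq_true, if_false, step_apply]
          split_ifs <;> first | omega | exact bot_le | exact le_rfl | exact (proper_lt_up p).le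
        · simp only [Bool.false_eq_true, if_false, step_apply]
          rw [if_neg (by omega), if_pos (by omega), if_neg (by omega), if_neg (by omega)]
          exact (proper_lt_up p).ne
      · refine lt_of_le_of_apply_ne (fun i => ?_) ⟨a, by omega⟩ ?_
        · simp only [if_true, step_apply]
          split_ifs <;> first | omega | exact bot_le | exact le_rfl
        · simp [step_apply, hab, (bot_lt_proper p).ne]
    · intro y hy
      by_cases e : y.1 ⟨a, by omega⟩ = ⊥
      · refine ⟨true, fun i => ?_⟩
        simp only [if_true, step_apply]
        split_ifs with h₁ h₂
        · exact (y.mono (Fin.le_def.2 (by simp only; omega))).trans e.le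
        · exact apply_le_of_le_step hy.le h₂
        · exact apply_le_up_of_le_step hy.le i
      · have key : y.1 ⟨b, hlt⟩ ≤ proper p := by
          rcases y.bot_or_eq_or_covBy (i := ⟨a, by omega⟩) (j := ⟨b, hlt⟩)
            (Fin.le_def.2 (by simp only; omega)) with h | h | h
          · exact absurd h e
          · exact h ▸ apply_le_of_le_step hy.le hab
          · rcases (apply_le_of_le_step hy.le (i := ⟨a, by omega⟩) hab).eq_or_lt with h' | h'
            · rw [h', proper_covBy_iff] at h
              refine absurd (fun i => ?_) hy.not_ge
              rw [step_apply]
              split_ifs with h₁ h₂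
              · exact bot_le
              · exact h'.ge.trans (y.mono (Fin.le_def.2 (by simp only; omega)))
              · exact h.ge.trans (y.mono (Fin.le_def.2 (by simp only; omega)))
            · rcases eq_bot_or_eq_top_or_proper (y.1 ⟨a, by omega⟩) with h'' | h'' | ⟨q, h''⟩
              · exact absurd h'' e
              · exact absurd (h'' ▸ h') not_top_lt
              · rw [h''] at h h'
                rw [proper_covBy_iff.1 h]
                exact proper_lt_iff.1 h'
        refine ⟨false, fun i => ?_⟩
        simp only [Bool.false_eq_true, if_false, step_apply]
        split_ifs with h₁ h₂
        · exact (apply_eq_bot_of_le_step hy.le h₁).le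
        · exact (y.mono (Fin.le_def.2 (by simp only; omega))).trans key
        · exact apply_le_up_of_le_step hy.le i

theorem card_upperCovers_topStep (hk : 0 < k) (ha : a ≤ m) :
    Nat.card {y : MCover (PKL k l) m // topStep hk ha ⋖ y} = if a = 0 then 0 else l + 1 := by
  have hcard : Nat.card (Option (Fin l)) = l + 1 := by simp
  split_ifs with ha₀
  · subst ha₀
    rw [card_upperCovers_eq (ι := Empty) (fun t => t.elim) (fun t => t.elim) (fun t => t.elim),
      Nat.card_of_isEmpty]
    refine fun y hy => absurd (fun i => ?_) hy.not_ge
    rw [topStep_apply, if_neg (by omega)]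
    exact le_top
  · have hbot : ∀ y : MCover (PKL k l) m, topStep hk ha < y → y.1 ⟨a - 1, by omega⟩ ≠ ⊥ := by
      refine fun y hy e => hy.not_ge fun i => ?_
      rw [topStep_apply]
      split_ifs
      · exact (y.mono (Fin.le_def.2 (by simp only; omega))).trans e.le
      · exact le_top
    rcases ha.lt_or_eq with ham | rfl
    · rw [card_upperCovers_eq (ι := Option (Fin l)) (fun o => mk (a := a - 1) (b := a) (by omega) ha
        (coatom_covBy_top hk o)), hcard]
      · intro o o' h
        have := h ⟨a - 1, by omega⟩
        simp only [mk_apply] at this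
        rw [if_neg (by omega), if_pos (by omega), if_neg (by omega), if_pos (by omega)] at this
        exact eq_of_coatom_le hk this
      · refine fun o => lt_of_le_of_apply_ne (fun i => ?_) ⟨a - 1, by omega⟩ ?_
        · rw [topStep_apply, mk_apply]
          split_ifs <;> first | omega | exact bot_le | exact le_rfl
        · rw [topStep_apply, mk_apply]
          simp only
          rw [if_pos (by omega), if_neg (by omega), if_pos (by omega)]
          exact (bot_lt_proper _).ne
      · intro y hy
        have htop : ∀ i : Fin m, a ≤ i → y.1 i = ⊤ := fun i hi => by
          have := hy.le i
          rwa [topStep_apply, if_neg (by omega), top_le_iff] at this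
        obtain ⟨o, ho⟩ : ∃ o, proper (coatom hk o) ≤ y.1 ⟨a - 1, by omega⟩ := by
          rcases y.bot_or_eq_or_covBy (i := ⟨a - 1, by omega⟩) (j := ⟨a, ham⟩)
            (Fin.le_def.2 (by simp only; omega)) with h | h | h
          · exact absurd h (hbot y hy)
          · rw [h, htop ⟨a, ham⟩ le_rfl]; exact ⟨none, le_top⟩
          · rw [htop ⟨a, ham⟩ le_rfl] at h
            obtain ⟨o, ho⟩ := exists_le_coatom hk h.lt
            exact ⟨o, (ho.eq_or_lt.resolve_right fun h' => h.2 h' (proper_lt_top _)).ge⟩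
        refine ⟨o, fun i => ?_⟩
        rw [mk_apply]
        split_ifs with h₁ h₂
        · exact bot_le
        · exact ho.trans (y.mono (Fin.le_def.2 (by simp only; omega)))
        · exact (htop i (by omega)).ge
    · rw [card_upperCovers_eq (ι := Option (Fin l))
        (fun o => step_s11 (atom hk o) (a := a - 1) (b := a) (by omega) ha), hcard]
      · intro o o' h
        have := h ⟨a - 1, by omega⟩
        simp only [step_apply] at this
        rw [if_neg (by omega), if_pos (by omega), if_neg (by omega), if_pos (by omega)] at this
        exact eq_of_atom_le hk this
      · refine fun o => lt_of_le_of_apply_ne (fun i => ?_) ⟨a - 1, by omega⟩ ?_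
        · rw [topStep_apply, if_pos i.2]
          exact bot_le
        · rw [topStep_apply, step_apply]
          simp only
          rw [if_pos (by omega), if_neg (by omega), if_pos (by omega)]
          exact (bot_lt_proper _).ne
      · intro y hy
        obtain ⟨o, ho⟩ := exists_atom_le hk (bot_lt_iff_ne_bot.2 (hbot y hy))
        refine ⟨o, fun i => ?_⟩
        rw [step_apply]
        split_ifs with h₁ h₂
        · exact bot_le
        · exact ho.trans (y.mono (Fin.le_def.2 (by simp only; omega)))
        · omega

theorem card_lowerCovers_topStep (hk : 0 < k) (ha : a ≤ m) :
    Nat.card {y : MCover (PKL k l) m // y ⋖ topStep hk ha} = if a = m then 0 else l + 1 := by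
  split_ifs with ham
  · subst ham
    rw [card_lowerCovers_eq (ι := Empty) (fun t => t.elim) (fun t => t.elim) (fun t => t.elim),
      Nat.card_of_isEmpty]
    refine fun y hy => absurd (fun i => ?_) hy.not_ge
    rw [topStep_apply, if_pos i.2]
    exact bot_le
  · rw [card_lowerCovers_eq (ι := Option (Fin l)) (fun o => mk (a := a) (b := a + 1) (by omega)
      (by omega) (coatom_covBy_top hk o))]
    · simp
    · intro o o' h
      have := h ⟨a, by omega⟩
      simp only [mk_apply] at this
      rw [if_neg (by omega), if_pos (by omega), if_neg (by omega), if_pos (by omega)] at this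
      exact eq_of_coatom_le hk this
    · refine fun o => lt_of_le_of_apply_ne (fun i => ?_) ⟨a, by omega⟩ ?_
      · rw [topStep_apply, mk_apply]
        split_ifs <;> first | exact le_rfl | exact le_top
      · simp [topStep_apply, mk_apply, (proper_lt_top _).ne]
    · intro y hy
      have hbot : ∀ i : Fin m, i < a → y.1 i = ⊥ := fun i hi => by
        have := hy.le i
        rwa [topStep_apply, if_pos hi, le_bot_iff] at this
      have hne : y.1 ⟨a, by omega⟩ ≠ ⊤ := fun e => hy.not_ge fun i => by
        rw [topStep_apply]
        split_ifs
        · exact bot_le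
        · exact e.ge.trans (y.mono (Fin.le_def.2 (by simp only; omega)))
      obtain ⟨o, ho⟩ := exists_le_coatom hk (lt_top_iff_ne_top.2 hne)
      refine ⟨o, fun i => ?_⟩
      rw [mk_apply]
      split_ifs with h₁ h₂
      · exact (hbot i h₁).le
      · exact (y.mono (Fin.le_def.2 (by simp only; omega))).trans ho
      · exact le_top

/-- The elements of the `m`-cover poset of `P_{k,l}`, parametrized by the steps
`⊥ < p < up p`, with at least one entry `p`, and by the steps `⊥ < ⊤`. -/
def ofSteps (hk : 0 < k) :
    (Fin k ⊕ Anti l) × (Σ b : Fin m, Fin (b + 1)) ⊕ Fin (m + 1) → MCover (PKL k l) m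
  | .inl (p, ⟨b, a⟩) => step_s11 p a.2.le b.2
  | .inr a => topStep hk (Nat.lt_succ_iff.1 a.2)

theorem ofSteps_injective (hk : 0 < k) :
    Function.Injective (ofSteps hk : _ → MCover (PKL k l) m) := by
  have hne : ∀ (p : Fin k ⊕ Anti l) {a b : ℕ} (hab : a < b) (hb : b ≤ m) {c : ℕ} (hc : c ≤ m),
      step_s11 p hab.le hb ≠ topStep hk hc := by
    intro p a b hab hb c hc h
    have := congrFun (congrArg Subtype.val h) ⟨a, by omega⟩
    rw [step_apply, if_neg (lt_irrefl _), if_pos hab, topStep_apply] at this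
    split_ifs at this
    · exact (bot_lt_proper p).ne' this
    · exact (proper_lt_top p).ne this
  have hstep : ∀ (p p' : Fin k ⊕ Anti l) {a b a' b' : ℕ} (hab : a < b) (hb : b ≤ m)
      (hab' : a' < b') (hb' : b' ≤ m), step_s11 p hab.le hb ≤ step_s11 p' hab'.le hb' →
      step_s11 p' hab'.le hb' ≤ step_s11 p hab.le hb → a' ≤ a ∧ p ≤ p' ∧ (p = p' → b' ≤ b) := by
    intro p p' a b a' b' hab hb hab' hb' h h'
    have ha : ∀ {p p' : Fin k ⊕ Anti l} {a b a' b' : ℕ} (hab : a < b) (hb : b ≤ m)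
      (hab' : a' < b') (hb' : b' ≤ m), step_s11 p hab.le hb ≤ step_s11 p' hab'.le hb' → a' ≤ a := by
      intro p p' a b a' b' hab hb hab' hb' h
      by_contra hlt
      have := apply_eq_bot_of_le_step h (i := ⟨a, by omega⟩) (not_le.1 hlt)
      rw [step_apply, if_neg (lt_irrefl _), if_pos hab] at this
      exact (bot_lt_proper p).ne' this
    have haa := ha hab hb hab' hb' h
    have haa' := ha hab' hb' hab hb h'
    refine ⟨haa, ?_, ?_⟩
    · obtain rfl : a = a' := le_antisymm haa' haa
      have := h ⟨a, by omega⟩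
      rwa [step_apply, step_apply, if_neg (lt_irrefl _), if_neg (lt_irrefl _), if_pos hab,
        if_pos hab', proper_le_proper] at this
    · rintro rfl
      by_contra hlt
      have := (up_le_of_step_le h (i := ⟨b, by omega⟩) le_rfl).trans
        (apply_le_of_le_step le_rfl (not_le.1 hlt))
      exact this.not_gt (proper_lt_up p)
  rintro (⟨p, b, a⟩ | a) (⟨p', b', a'⟩ | a') h
  · have h₁ := hstep p p' a.2 b.2 a'.2 b'.2 h.le h.ge
    have h₂ := hstep p' p a'.2 b'.2 a.2 b.2 h.ge h.le
    obtain rfl : p = p' := le_antisymm h₁.2.1 h₂.2.1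
    obtain rfl : b = b' := Fin.ext (by have := h₁.2.2 rfl; have := h₂.2.2 rfl; omega)
    obtain rfl : a = a' := Fin.ext (le_antisymm h₂.1 h₁.1)
    rfl
  · exact absurd h (hne p a.2 b.2 _)
  · exact absurd h.symm (hne p' a'.2 b'.2 _)
  · have hle : ∀ {a a' : Fin (m + 1)}, ofSteps (l := l) hk (.inr a) ≤ ofSteps hk (.inr a') →
        a' ≤ a := by
      intro a a' h
      by_contra hlt
      rw [not_le, Fin.lt_def] at hlt
      have := h ⟨a, by omega⟩
      simp only [ofSteps] at this
      rw [topStep_apply, topStep_apply, if_neg (lt_irrefl _), if_pos hlt] at this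
      exact this.not_gt bot_lt_top
    rw [le_antisymm (hle h.ge) (hle h.le)]

theorem ofSteps_surjective (hk : 0 < k) :
    Function.Surjective (ofSteps hk : _ → MCover (PKL k l) m) := by
  have hstep : ∀ (p : Fin k ⊕ Anti l) {a b : ℕ} (hab : a < b) (hb : b ≤ m),
      ∃ d, ofSteps hk d = step_s11 p hab.le hb := by
    intro p a b hab hb
    obtain ⟨b, rfl⟩ : ∃ c, b = c + 1 := ⟨b - 1, by omega⟩
    exact ⟨.inl (p, ⟨⟨b, hb⟩, ⟨a, hab⟩⟩), rfl⟩
  have hconst : ∀ (v : PKL k l) {a : ℕ} (ha : a ≤ m) (y : MCover (PKL k l) m),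
      (∀ i : Fin m, y.1 i = if (i : ℕ) < a then ⊥ else v) → ∃ d, ofSteps hk d = y := by
    intro v a ha y hy
    have hbot : (∀ i, y.1 i = ⊥) → ∃ d, ofSteps hk d = y := fun h => by
      refine ⟨.inr (Fin.last m), Subtype.ext (funext fun i => ?_)⟩
      simp [ofSteps, topStep_apply, h]
    rcases eq_bot_or_eq_top_or_proper v with rfl | rfl | ⟨q, rfl⟩
    · exact hbot fun i => by simp [hy]
    · refine ⟨.inr ⟨a, by omega⟩, Subtype.ext (funext fun i => ?_)⟩
      simp [ofSteps, topStep_apply, hy]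
    · rcases ha.lt_or_eq with ham | rfl
      · obtain ⟨d, hd⟩ := hstep q ham le_rfl
        refine ⟨d, hd.trans (Subtype.ext (funext fun i => ?_))⟩
        simp [step_apply, hy]
      · exact hbot fun i => by simp [hy]
  intro y
  obtain ⟨l₀, l₁, l₂, p₁, p₂, hm, hp, hf⟩ := y.2
  rcases eq_bot_or_eq_top_or_proper p₁ with rfl | rfl | ⟨q, rfl⟩
  · refine hconst p₂ (a := l₀ + l₁) (by omega) y fun i => ?_
    rw [hf]; split_ifs <;> first | omega | rfl
  · exact absurd hp.lt not_top_lt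
  · obtain rfl := proper_covBy_iff.1 hp
    rcases Nat.eq_zero_or_pos l₁ with rfl | hl₁
    · refine hconst (up q) (a := l₀) (by omega) y fun i => ?_
      rw [hf]; split_ifs <;> first | omega | rfl
    · obtain ⟨d, hd⟩ := hstep q (show l₀ < l₀ + l₁ by omega) (show l₀ + l₁ ≤ m by omega)
      exact ⟨d, hd.trans (Subtype.ext (funext fun i => (hf i).symm))⟩

end MCover

section Counting

open Polynomial

theorem card_fiber_eq_coeff_sum {D : Type*} [Fintype D] (n : D → ℕ) (j : ℕ) :
    Nat.card {d // n d = j} = (∑ d, X ^ n d : ℕ[X]).coeff j := by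
  classical
  simp [finsetSum_coeff, coeff_X_pow, Nat.card_eq_fintype_card, Fintype.card_subtype, eq_comm]

theorem sum_pairs_first (m : ℕ) :
    ∑ b : Fin m, ∑ a : Fin (b + 1), (X : ℕ[X]) ^ (if (a : ℕ) = 0 then 1 else 2) =
      (m : ℕ[X]) * X + (m.choose 2 : ℕ[X]) * X ^ 2 := by
  induction m with
  | zero => simp
  | succ m ih =>
    rw [Fin.sum_univ_castSucc]
    simp only [Fin.val_castSucc, ih, Fin.val_last, Fin.sum_univ_succ (n := m)]
    simp [Nat.choose_succ_succ' m 1]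
    ring

theorem sum_pairs_last {m : ℕ} (hm : 0 < m) :
    ∑ b : Fin m, ∑ _a : Fin (b + 1), (X : ℕ[X]) ^ (if (b : ℕ) + 1 = m then 1 else 2) =
      (m : ℕ[X]) * X + (m.choose 2 : ℕ[X]) * X ^ 2 := by
  obtain ⟨m, rfl⟩ := Nat.exists_eq_succ_of_ne_zero hm.ne'
  have hsum : ∑ b : Fin m, ((b : ℕ) + 1) = (m + 1).choose 2 := by
    rw [Fin.sum_univ_eq_sum_range (fun b => b + 1), Nat.choose_two_right, ← Finset.sum_range_id,
      Finset.sum_range_succ' (fun b => b) m, add_zero]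
  have hne : ∀ b : Fin m, ¬ (b : ℕ) + 1 = m + 1 := fun b => by omega
  rw [Fin.sum_univ_castSucc, ← hsum]
  simp only [Finset.sum_const, Finset.card_univ, Fintype.card_fin, Fin.val_castSucc, Fin.val_last,
    Nat.succ_eq_add_one, hne, if_true, if_false, nsmul_eq_mul, pow_one]
  rw [← Finset.sum_mul, Nat.cast_sum, add_comm]

theorem sum_first (m l : ℕ) :
    ∑ a : Fin (m + 1), (X : ℕ[X]) ^ (if (a : ℕ) = 0 then 0 else l + 1) =
      1 + (m : ℕ[X]) * X ^ (l + 1) := by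
  rw [Fin.sum_univ_succ]; simp

theorem sum_last (m l : ℕ) :
    ∑ a : Fin (m + 1), (X : ℕ[X]) ^ (if (a : ℕ) = m then 0 else l + 1) =
      1 + (m : ℕ[X]) * X ^ (l + 1) := by
  have hne : ∀ b : Fin m, ¬ (b : ℕ) = m := fun b => b.2.ne
  rw [Fin.sum_univ_castSucc]; simp [hne, add_comm]

instance (l : ℕ) : Fintype (Anti l) := inferInstanceAs (Fintype (Fin l))

theorem card_anti (l : ℕ) : Fintype.card (Anti l) = l := Fintype.card_fin l

theorem card_fiber_steps {k l m : ℕ} (n : (Σ b : Fin m, Fin (b + 1)) → ℕ) (n' : Fin (m + 1) → ℕ)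
    (hn : ∑ b : Fin m, ∑ a : Fin (b + 1), (X : ℕ[X]) ^ n ⟨b, a⟩ =
      (m : ℕ[X]) * X + (m.choose 2 : ℕ[X]) * X ^ 2)
    (hn' : ∑ a, (X : ℕ[X]) ^ n' a = 1 + (m : ℕ[X]) * X ^ (l + 1)) (j : ℕ) :
    Nat.card {d : (Fin k ⊕ Anti l) × (Σ b : Fin m, Fin (b + 1)) ⊕ Fin (m + 1) //
        Sum.elim (fun d => n d.2) n' d = j} =
      (C 1 + C ((k + l) * m) * X + C ((k + l) * m.choose 2) * X ^ 2 +
        C m * X ^ (l + 1) : ℕ[X]).coeff j := by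
  rw [card_fiber_eq_coeff_sum]
  congr 1
  rw [Fintype.sum_sum_type, Fintype.sum_prod_type]
  simp only [Sum.elim_inl, Sum.elim_inr, Fintype.sum_sigma, hn, hn', Finset.sum_const,
    Finset.card_univ, Fintype.card_sum, Fintype.card_fin, card_anti, nsmul_eq_mul]
  have hC : ∀ n : ℕ, (C n : ℕ[X]) = n := fun n => C_eq_natCast n
  simp only [hC]
  push_cast
  ring

end Counting

open Polynomial in
/-- In `P_{k,l}^⟨m⟩`, the number of elements with exactly `j` upper covers and the number
of elements with exactly `j` lower covers both equal the coefficient of `t^j` in the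
polynomial `1 + (k+l)m·t + (k+l)·C(m,2)·t² + m·t^{l+1}`. -/
theorem stmt_11 (k l m : ℕ) (hk : 0 < k) (hl : 0 < l) (hm : 0 < m) (j : ℕ) :
    Nat.card {x : MCover (PKL k l) m // Nat.card {y : MCover (PKL k l) m // x ⋖ y} = j} =
      (C 1 + C ((k + l) * m) * X + C ((k + l) * m.choose 2) * X ^ 2 +
        C m * X ^ (l + 1) : Polynomial ℕ).coeff j ∧
    Nat.card {x : MCover (PKL k l) m // Nat.card {y : MCover (PKL k l) m // y ⋖ x} = j} =
      (C 1 + C ((k + l) * m) * X + C ((k + l) * m.choose 2) * X ^ 2 +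
        C m * X ^ (l + 1) : Polynomial ℕ).coeff j := by
  have hbij : Function.Bijective (MCover.ofSteps (l := l) (m := m) hk) :=
    ⟨MCover.ofSteps_injective hk, MCover.ofSteps_surjective hk⟩
  constructor
  · rw [← card_fiber_steps (fun d => if (d.2 : ℕ) = 0 then 1 else 2)
      (fun a => if (a : ℕ) = 0 then 0 else l + 1) (sum_pairs_first m) (sum_first m l)]
    refine (Nat.card_congr ((Equiv.ofBijective _ hbij).subtypeEquiv fun d => ?_)).symm
    rcases d with ⟨p, b, a⟩ | a
    · exact (MCover.card_upperCovers_step p a.2 b.2).symm ▸ Iff.rfl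
    · exact (MCover.card_upperCovers_topStep hk (Nat.lt_succ_iff.1 a.2)).symm ▸ Iff.rfl
  · rw [← card_fiber_steps (fun d => if (d.1 : ℕ) + 1 = m then 1 else 2)
      (fun a => if (a : ℕ) = m then 0 else l + 1) (sum_pairs_last hm) (sum_last m l)]
    refine (Nat.card_congr ((Equiv.ofBijective _ hbij).subtypeEquiv fun d => ?_)).symm
    rcases d with ⟨p, b, a⟩ | a
    · exact (MCover.card_lowerCovers_step p a.2 b.2).symm ▸ Iff.rfl
    · exact (MCover.card_lowerCovers_topStep hk (Nat.lt_succ_iff.1 a.2)).symm ▸ Iff.rfl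
end
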